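/- arXiv:1108.3249 — 10 statements merged into one kernel-verified Lean document; each statement's English description precedes it below -/
import Mathlib

section
/- For every positive integer k there exists a constant c ≥ 1, depending only on k, such that for every permutation pattern q of length k and for all positive integers n and m, the number S_{n,m}(q) of permutations of the regular multiset [n]_m that avoid q satisfies S_{n,m}(q) ≤ c^(n·m). -/
/-- A permutation `p` of length `n` contains the permutation `q` of length `k` as a pattern. -/
def PermContains {n k : ℕ} (p : Equiv.Perm (Fin n)) (q : Equiv.Perm (Fin k)) : Prop :=
  ∃ f : Fin k → Fin n, StrictMono f ∧ ∀ a b : Fin k, p (f a) < p (f b) ↔ q a < q b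

/-- A word `w` over `{1,…,n}` contains the permutation pattern `q` of length `k`. -/
def WordContains {l n k : ℕ} (w : Fin l → Fin n) (q : Equiv.Perm (Fin k)) : Prop :=
  ∃ f : Fin k → Fin l, StrictMono f ∧ ∀ a b : Fin k, w (f a) < w (f b) ↔ q a < q b

/-- `w` is a permutation of the regular multiset `[n]_m`: each letter occurs exactly `m` times. -/
def IsRegularWord {l n : ℕ} (m : ℕ) (w : Fin l → Fin n) : Prop :=
  ∀ j : Fin n, (Finset.univ.filter fun i => w i = j).card = m

/-- Ordered-subgraph containment for simple bipartite graphs given by their edge sets. -/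
def GraphContains {n n' k k' : ℕ} (P : Finset (Fin n × Fin n')) (Q : Finset (Fin k × Fin k')) :
    Prop :=
  ∃ (f : Fin k → Fin n) (f' : Fin k' → Fin n'),
    StrictMono f ∧ StrictMono f' ∧ ∀ v v', (v, v') ∈ Q → (f v, f' v') ∈ P

/-- The bipartite graph associated to a permutation `q`: edges `(i, q i)`. -/
def permGraph {k : ℕ} (q : Equiv.Perm (Fin k)) : Finset (Fin k × Fin k) :=
  Finset.univ.image fun i => (i, q i)

/-- The bipartite graph associated to a word `w`: edges `(i, w i)`. -/
def wordGraph {l n : ℕ} (w : Fin l → Fin n) : Finset (Fin l × Fin n) :=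
  Finset.univ.image fun i => (i, w i)

/-- Pattern containment for 0-1 matrices. -/
def MatContains {n n' k k' : ℕ} (P : Fin n → Fin n' → Bool) (Q : Fin k → Fin k' → Bool) : Prop :=
  ∃ (r : Fin k → Fin n) (c : Fin k' → Fin n'),
    StrictMono r ∧ StrictMono c ∧ ∀ i j, Q i j = true → P (r i) (c j) = true

/-- The permutation matrix of a permutation `q`: 1-entry at `(i, q i)`. -/
def permMatrix {k : ℕ} (q : Equiv.Perm (Fin k)) : Fin k → Fin k → Bool :=
  fun i j => decide (q i = j)

/-- The number of 1-entries of a 0-1 matrix. -/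
def oneEntries {n n' : ℕ} (P : Fin n → Fin n' → Bool) : ℕ :=
  (Finset.univ.filter fun ij : Fin n × Fin n' => P ij.1 ij.2 = true).card

/-- The contraction of a bipartite graph on `([n·m],[n])` to one on `([n],[n])`:
`(i,j)` is an edge iff some vertex `t` in the `i`-th block of `m` consecutive vertices
is joined to `j`. -/
def contraction {n m : ℕ} (G : Finset (Fin (n * m) × Fin n)) : Finset (Fin n × Fin n) :=
  Finset.univ.filter fun ij : Fin n × Fin n =>
    ∃ t : Fin (n * m), (t, ij.2) ∈ G ∧ m * (ij.1 : ℕ) ≤ (t : ℕ) ∧ (t : ℕ) < m * ((ij.1 : ℕ) + 1)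

/-- The 0-1 adjacency matrix of a bipartite graph. -/
def adjMatrix {n n' : ℕ} (G : Finset (Fin n × Fin n')) : Fin n → Fin n' → Bool :=
  fun i j => decide ((i, j) ∈ G)

/-- A word contains the multiset pattern `212`. -/
def Contains212 {l n : ℕ} (w : Fin l → Fin n) : Prop :=
  ∃ i₁ i₂ i₃ : Fin l, i₁ < i₂ ∧ i₂ < i₃ ∧ w i₁ = w i₃ ∧ w i₂ < w i₁

namespace MSW

open Finset

/-- Containment of a permutation pattern in a finite set of cells. -/
def Con {k : ℕ} (S : Finset (ℕ × ℕ)) (q : Equiv.Perm (Fin k)) : Prop :=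
  ∃ f : Fin k → ℕ × ℕ, (∀ i, f i ∈ S) ∧ (∀ a b, a < b → (f a).1 < (f b).1) ∧
    ∀ a b, q a < q b → (f a).2 < (f b).2

/-- Contraction by `s × t` blocks. -/
def blk (s t : ℕ) (p : ℕ × ℕ) : ℕ × ℕ := (p.1 / s, p.2 / t)

theorem con_of_contract {k : ℕ} {S : Finset (ℕ × ℕ)} {q : Equiv.Perm (Fin k)} {s t : ℕ}
    (h : Con (S.image (blk s t)) q) : Con S q := by
  obtain ⟨f, hf, h1, h2⟩ := h
  have : ∀ i, ∃ p ∈ S, blk s t p = f i := fun i => by simpa using hf i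
  choose g hg hgf using this
  refine ⟨g, hg, fun a b hab => ?_, fun a b hab => ?_⟩
  · have := h1 a b hab
    rw [← hgf, ← hgf] at this
    exact lt_of_not_ge fun hle => absurd (Nat.div_le_div_right (c := s) hle) (not_le.2 this)
  · have := h2 a b hab
    rw [← hgf, ← hgf] at this
    exact lt_of_not_ge fun hle => absurd (Nat.div_le_div_right (c := t) hle) (not_le.2 this)

theorem con_of_swap {k : ℕ} {S : Finset (ℕ × ℕ)} {q : Equiv.Perm (Fin k)}
    (h : Con (S.image Prod.swap) q.symm) : Con S q := by
  obtain ⟨f, hf, h1, h2⟩ := h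
  refine ⟨fun i => (f (q i)).swap, fun i => ?_, fun a b hab => ?_, fun a b hab => ?_⟩
  · have := hf (q i)
    rw [mem_image] at this
    obtain ⟨p, hp, e⟩ := this
    change (f (q i)).swap ∈ S
    rw [← e]; simpa using hp
  · exact h2 (q a) (q b) (by simpa using hab)
  · exact h1 (q a) (q b) hab

/-- Cells of `S` in block `p`. -/
def cells (S : Finset (ℕ × ℕ)) (s : ℕ) (p : ℕ × ℕ) : Finset (ℕ × ℕ) :=
  S.filter fun x => blk s s x = p

/-- Set of columns used in block `p`. -/
def cols (S : Finset (ℕ × ℕ)) (s : ℕ) (p : ℕ × ℕ) : Finset ℕ := (cells S s p).image Prod.snd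

def rows (S : Finset (ℕ × ℕ)) (s : ℕ) (p : ℕ × ℕ) : Finset ℕ := (cells S s p).image Prod.fst

theorem cols_sub {S : Finset (ℕ × ℕ)} {s : ℕ} (hs : 0 < s) (p : ℕ × ℕ) :
    cols S s p ⊆ Ico (s * p.2) (s * p.2 + s) := by
  intro x hx
  simp only [cols, cells, mem_image, mem_filter] at hx
  obtain ⟨y, ⟨-, hy⟩, rfl⟩ := hx
  subst hy
  simp only [blk, mem_Ico]
  have := Nat.div_add_mod y.2 s
  have := Nat.mod_lt y.2 hs
  omega

theorem rows_sub {S : Finset (ℕ × ℕ)} {s : ℕ} (hs : 0 < s) (p : ℕ × ℕ) :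
    rows S s p ⊆ Ico (s * p.1) (s * p.1 + s) := by
  intro x hx
  simp only [rows, cells, mem_image, mem_filter] at hx
  obtain ⟨y, ⟨-, hy⟩, rfl⟩ := hx
  subst hy
  simp only [blk, mem_Ico]
  have := Nat.div_add_mod y.1 s
  have := Nat.mod_lt y.1 hs
  omega

theorem wide_bound {k s : ℕ} (hs : 0 < s) {S : Finset (ℕ × ℕ)} {q : Equiv.Perm (Fin k)}
    (hq : ¬ Con S q) (b : ℕ) (R : Finset ℕ) (hR : ∀ a ∈ R, k ≤ (cols S s (a, b)).card) :
    R.card ≤ 2 ^ s * k := by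
  by_contra hlt
  push Not at hlt
  have hmaps : ∀ a ∈ R, cols S s (a, b) ∈ (Ico (s * b) (s * b + s)).powerset := fun a _ =>
    mem_powerset.2 (cols_sub hs (a, b))
  obtain ⟨A, -, hA⟩ := exists_lt_card_fiber_of_mul_lt_card_of_maps_to (n := k) hmaps
    (by simpa using hlt)
  obtain ⟨R', hR'sub, hR'⟩ := exists_subset_card_eq hA.le
  have hAk : k ≤ A.card := by
    obtain ⟨a, ha⟩ := card_pos.1 (lt_of_le_of_lt (Nat.zero_le k) hA)
    rw [mem_filter] at ha
    rw [← ha.2]; exact hR a ha.1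
  obtain ⟨A', hA'sub, hA'⟩ := exists_subset_card_eq hAk
  let r := R'.orderEmbOfFin hR'
  let c := A'.orderEmbOfFin hA'
  have hex : ∀ i : Fin k, ∃ x ∈ S, blk s s x = (r i, b) ∧ x.2 = c (q i) := fun i => by
    have h1 : r i ∈ R' := orderEmbOfFin_mem R' hR' i
    have h2 : c (q i) ∈ A' := orderEmbOfFin_mem A' hA' (q i)
    have h3 := hR'sub h1
    rw [mem_filter] at h3
    have h4 := hA'sub h2
    rw [← h3.2] at h4
    simp only [cols, cells, mem_image, mem_filter] at h4
    obtain ⟨x, ⟨hx, hx1⟩, hx2⟩ := h4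
    exact ⟨x, hx, hx1, hx2⟩
  choose f hf hf1 hf2 using hex
  refine hq ⟨f, hf, fun a b' hab => ?_, fun a b' hab => ?_⟩
  · have h1 : r a < r b' := r.strictMono hab
    have ha := congrArg Prod.fst (hf1 a)
    have hb := congrArg Prod.fst (hf1 b')
    simp only [blk] at ha hb
    rw [← ha, ← hb] at h1
    exact lt_of_not_ge fun hle => absurd (Nat.div_le_div_right (c := s) hle) (not_le.2 h1)
  · rw [hf2, hf2]; exact c.strictMono hab

theorem rows_eq_cols (S : Finset (ℕ × ℕ)) (s a b : ℕ) :
    rows S s (a, b) = cols (S.image Prod.swap) s (b, a) := by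
  ext x
  simp only [rows, cols, cells, blk, mem_image, mem_filter, Prod.exists, Prod.swap_prod_mk,
    Prod.mk.injEq]
  constructor
  · rintro ⟨u, v, ⟨h, h1, h2⟩, rfl⟩
    exact ⟨v, u, ⟨⟨u, v, h, rfl, rfl⟩, h2, h1⟩, rfl⟩
  · rintro ⟨u, v, ⟨⟨u', v', h, rfl, rfl⟩, h2, h1⟩, rfl⟩
    exact ⟨u', v', ⟨h, h1, h2⟩, rfl⟩

theorem tall_bound {k s : ℕ} (hs : 0 < s) {S : Finset (ℕ × ℕ)} {q : Equiv.Perm (Fin k)}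
    (hq : ¬ Con S q) (a : ℕ) (R : Finset ℕ) (hR : ∀ b ∈ R, k ≤ (rows S s (a, b)).card) :
    R.card ≤ 2 ^ s * k := by
  refine wide_bound hs (S := S.image Prod.swap) (q := q.symm) (fun h => hq (con_of_swap h)) a R ?_
  intro b hb
  rw [← rows_eq_cols]; exact hR b hb

theorem cells_card (S : Finset (ℕ × ℕ)) (s : ℕ) (p : ℕ × ℕ) :
    (cells S s p).card ≤ (rows S s p).card * (cols S s p).card := by
  rw [← card_product]
  apply card_le_card
  intro x hx
  exact mem_product.2 ⟨mem_image_of_mem _ hx, mem_image_of_mem _ hx⟩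

theorem step {k s n n' : ℕ} (hs : 0 < s) (hn : n ≤ n' * s) {S : Finset (ℕ × ℕ)}
    {q : Equiv.Perm (Fin k)} (hq : ¬ Con S q) (hS : S ⊆ range n ×ˢ range n) :
    S.card ≤ k ^ 2 * (S.image (blk s s)).card + 2 * (s ^ 2 * (n' * (2 ^ s * k))) := by
  set T := S.image (blk s s) with hT
  have hTn : T ⊆ range n' ×ˢ range n' := by
    intro x hx
    obtain ⟨y, hy, rfl⟩ := mem_image.1 hx
    have := mem_product.1 (hS hy)
    simp only [mem_range] at this
    simp only [blk, mem_product, mem_range]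
    exact ⟨(Nat.div_lt_iff_lt_mul hs).2 (by omega), (Nat.div_lt_iff_lt_mul hs).2 (by omega)⟩
  have hsum : S.card = ∑ p ∈ T, (cells S s p).card :=
    card_eq_sum_card_fiberwise fun x hx => mem_image_of_mem _ hx
  let W := T.filter fun p => k ≤ (cols S s p).card
  let L := T.filter fun p => k ≤ (rows S s p).card
  have hW : W.card ≤ n' * (2 ^ s * k) := by
    have := card_le_mul_card_image_of_maps_to (s := W) (t := range n') (f := Prod.snd)
      (fun p hp => (mem_product.1 (hTn (mem_filter.1 hp).1)).2) (2 ^ s * k) ?_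
    · rw [card_range] at this; linarith [mul_comm n' (2 ^ s * k)]
    intro b _
    have h := wide_bound hs hq b ((W.filter fun p => p.2 = b).image Prod.fst) ?_
    · rwa [card_image_of_injOn] at h
      intro x hx y hy hxy
      simp only [coe_filter, Set.mem_ofPred_eq] at hx hy
      exact Prod.ext hxy (hx.2.trans hy.2.symm)
    intro a ha
    obtain ⟨p, hp, rfl⟩ := mem_image.1 ha
    obtain ⟨hp1, rfl⟩ := mem_filter.1 hp
    exact (mem_filter.1 hp1).2
  have hL : L.card ≤ n' * (2 ^ s * k) := by
    have := card_le_mul_card_image_of_maps_to (s := L) (t := range n') (f := Prod.fst)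
      (fun p hp => (mem_product.1 (hTn (mem_filter.1 hp).1)).1) (2 ^ s * k) ?_
    · rw [card_range] at this; linarith [mul_comm n' (2 ^ s * k)]
    intro b _
    have h := tall_bound hs hq b ((L.filter fun p => p.1 = b).image Prod.snd) ?_
    · rwa [card_image_of_injOn] at h
      intro x hx y hy hxy
      simp only [coe_filter, Set.mem_ofPred_eq] at hx hy
      exact Prod.ext (hx.2.trans hy.2.symm) hxy
    intro a ha
    obtain ⟨p, hp, rfl⟩ := mem_image.1 ha
    obtain ⟨hp1, rfl⟩ := mem_filter.1 hp
    exact (mem_filter.1 hp1).2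
  have hpt : ∀ p ∈ T, (cells S s p).card ≤ k ^ 2 +
      ((if k ≤ (cols S s p).card then s ^ 2 else 0) +
        (if k ≤ (rows S s p).card then s ^ 2 else 0)) := by
    intro p _
    have h0 := cells_card S s p
    have h1 : (cols S s p).card ≤ s := by simpa using card_le_card (cols_sub (S := S) hs p)
    have h2 : (rows S s p).card ≤ s := by simpa using card_le_card (rows_sub (S := S) hs p)
    have h3 := Nat.mul_le_mul h2 h1
    split_ifs with h4 h5 h5
    · nlinarith
    · nlinarith
    · nlinarith
    · push Not at h4 h5
      have := Nat.mul_le_mul h5.le h4.le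
      nlinarith
  have h := sum_le_sum hpt
  rw [← hsum, sum_add_distrib, sum_add_distrib, ← sum_filter, ← sum_filter, sum_const, sum_const,
    sum_const] at h
  simp only [smul_eq_mul] at h
  have e1 := Nat.mul_le_mul_right (s ^ 2) hW
  have e2 := Nat.mul_le_mul_right (s ^ 2) hL
  change S.card ≤ T.card * k ^ 2 + (W.card * s ^ 2 + L.card * s ^ 2) at h
  linarith [mul_comm T.card (k ^ 2), mul_comm (s ^ 2) (n' * (2 ^ s * k))]

/-- Marcus–Tardos (Füredi–Hajnal). -/
theorem marcus_tardos (k : ℕ) : ∃ C : ℕ, ∀ (q : Equiv.Perm (Fin k)) (n : ℕ) (S : Finset (ℕ × ℕ)),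
    S ⊆ range n ×ˢ range n → ¬ Con S q → S.card ≤ C * n := by
  obtain ⟨s, hs⟩ : ∃ s, s = k ^ 2 + 2 := ⟨_, rfl⟩
  obtain ⟨D, hD⟩ : ∃ D, D = 2 * (s ^ 2 * (2 ^ s * k)) := ⟨_, rfl⟩
  refine ⟨D + s ^ 2, fun q n => ?_⟩
  induction n using Nat.strong_induction_on with
  | _ n ih =>
    intro S hS hq
    by_cases hn : n ≤ s ^ 2
    · have := card_le_card hS
      rw [card_product, card_range] at this
      calc S.card ≤ n * n := this
        _ ≤ (D + s ^ 2) * n := Nat.mul_le_mul_right _ (by omega)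
    push Not at hn
    have hs0 : 0 < s := by omega
    have hs2 : 2 ≤ s := by omega
    obtain ⟨n', hn'⟩ : ∃ n', n' = n / s + 1 := ⟨_, rfl⟩
    have h1 : n' * s ≤ n + s := by
      have := Nat.div_mul_le_self n s
      rw [hn', add_mul]; omega
    have h2 : n ≤ n' * s := by
      have := Nat.div_add_mod n s
      have := Nat.mod_lt n hs0
      rw [hn', add_mul, mul_comm]; omega
    have hlt : n' < n := by nlinarith
    have hst := step hs0 h2 hq hS
    have hT := ih n' hlt (S.image (blk s s)) ?_ (fun h => hq (con_of_contract h))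
    · have hk : (k ^ 2 + 1) * n' ≤ n := by
        have e : k ^ 2 + 1 = s - 1 := by omega
        have : (k ^ 2 + 1) * (n' * s) ≤ n * s := by
          calc (k ^ 2 + 1) * (n' * s) ≤ (k ^ 2 + 1) * (n + s) := Nat.mul_le_mul_left _ h1
            _ ≤ n * s := by
              have : s = (k ^ 2 + 1) + 1 := by omega
              generalize k ^ 2 + 1 = x at *
              subst this
              nlinarith
        rw [← mul_assoc] at this
        exact Nat.le_of_mul_le_mul_right this hs0
      calc S.card ≤ k ^ 2 * ((D + s ^ 2) * n') + D * n' := by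
            have := Nat.mul_le_mul_left (k ^ 2) hT
            have e : 2 * (s ^ 2 * (n' * (2 ^ s * k))) = D * n' := by rw [hD]; ring
            omega
        _ ≤ (D + s ^ 2) * ((k ^ 2 + 1) * n') := by
            have : 0 ≤ s ^ 2 * n' := Nat.zero_le _
            linarith [show (D + s ^ 2) * ((k ^ 2 + 1) * n') =
              k ^ 2 * ((D + s ^ 2) * n') + D * n' + s ^ 2 * n' by ring]
        _ ≤ (D + s ^ 2) * n := Nat.mul_le_mul_left _ hk
    · intro x hx
      obtain ⟨y, hy, rfl⟩ := mem_image.1 hx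
      have := mem_product.1 (hS hy)
      simp only [mem_range] at this
      simp only [blk, mem_product, mem_range]
      exact ⟨(Nat.div_lt_iff_lt_mul hs0).2 (by omega), (Nat.div_lt_iff_lt_mul hs0).2 (by omega)⟩

open Classical in
/-- The family of `q`-avoiding `a × b` matrices. -/
noncomputable def Fam {k : ℕ} (q : Equiv.Perm (Fin k)) (a b : ℕ) : Finset (Finset (ℕ × ℕ)) :=
  (range a ×ˢ range b).powerset.filter fun S => ¬ Con S q

theorem mem_Fam {k : ℕ} {q : Equiv.Perm (Fin k)} {a b : ℕ} {S : Finset (ℕ × ℕ)} :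
    S ∈ Fam q a b ↔ S ⊆ range a ×ˢ range b ∧ ¬ Con S q := by
  simp [Fam]

theorem fam_step {k C : ℕ} {q : Equiv.Perm (Fin k)}
    (hC : ∀ (n : ℕ) (S : Finset (ℕ × ℕ)), S ⊆ range n ×ˢ range n → ¬ Con S q → S.card ≤ C * n)
    {a b n s t : ℕ} (hs : 0 < s) (ht : 0 < t) (ha : a ≤ n * s) (hb : b ≤ n * t) :
    (Fam q a b).card ≤ 2 ^ (s * t * (C * n)) * (Fam q n n).card := by
  refine card_le_mul_card_image_of_maps_to (f := fun S => S.image (blk s t)) ?_ _ ?_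
  · intro S hS
    obtain ⟨hS, hq⟩ := mem_Fam.1 hS
    refine mem_Fam.2 ⟨?_, fun h => hq (con_of_contract h)⟩
    intro x hx
    obtain ⟨y, hy, rfl⟩ := mem_image.1 hx
    have := mem_product.1 (hS hy)
    simp only [mem_range] at this
    simp only [blk, mem_product, mem_range]
    exact ⟨(Nat.div_lt_iff_lt_mul hs).2 (by omega), (Nat.div_lt_iff_lt_mul ht).2 (by omega)⟩
  · intro T hT
    obtain ⟨hT, hq⟩ := mem_Fam.1 hT
    let U := (T ×ˢ (range s ×ˢ range t)).image
      fun x : (ℕ × ℕ) × (ℕ × ℕ) => (s * x.1.1 + x.2.1, t * x.1.2 + x.2.2)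
    have hU : U.card ≤ s * t * (C * n) := by
      refine card_image_le.trans ?_
      rw [card_product, card_product, card_range, card_range, mul_comm]
      exact Nat.mul_le_mul_left _ (hC n T hT hq)
    calc _ ≤ U.powerset.card := by
          apply card_le_card
          intro S hS
          obtain ⟨-, rfl⟩ := mem_filter.1 hS
          rw [mem_powerset]
          intro x hx
          refine mem_image.2 ⟨(blk s t x, (x.1 % s, x.2 % t)), ?_, ?_⟩
          · simp only [mem_product, mem_range]
            exact ⟨mem_image_of_mem _ hx, Nat.mod_lt _ hs, Nat.mod_lt _ ht⟩
          · simp [blk, Nat.div_add_mod]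
      _ = 2 ^ U.card := card_powerset _
      _ ≤ _ := Nat.pow_le_pow_right (by norm_num) hU

theorem klazar {k C : ℕ} {q : Equiv.Perm (Fin k)}
    (hC : ∀ (n : ℕ) (S : Finset (ℕ × ℕ)), S ⊆ range n ×ˢ range n → ¬ Con S q → S.card ≤ C * n)
    (n : ℕ) : (Fam q n n).card ≤ 2 ^ ((4 * C + 1) * (2 * n)) := by
  induction n using Nat.strong_induction_on with
  | _ n ih =>
    by_cases hn : n ≤ 1
    · calc (Fam q n n).card ≤ 2 ^ (n * n) := by
            refine (card_le_card (fun S hS => mem_powerset.2 (mem_Fam.1 hS).1 :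
              Fam q n n ⊆ (range n ×ˢ range n).powerset)).trans ?_
            simp
        _ ≤ _ := Nat.pow_le_pow_right (by norm_num) (by nlinarith)
    · obtain ⟨n', hn'⟩ : ∃ n', n' = (n + 1) / 2 := ⟨_, rfl⟩
      have h := fam_step hC (a := n) (b := n) (n := n') (s := 2) (t := 2) (by norm_num)
        (by norm_num) (by omega) (by omega)
      have h2 := ih n' (by omega)
      have h3 : 3 * n' ≤ 2 * n := by omega
      refine (h.trans (Nat.mul_le_mul_left _ h2)).trans ?_
      rw [← pow_add]
      exact Nat.pow_le_pow_right (by norm_num) (by nlinarith)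

/-- The graph of a word as a set of cells. -/
def gr {l n : ℕ} (w : Fin l → Fin n) : Finset (ℕ × ℕ) :=
  univ.image fun i : Fin l => ((i : ℕ), (w i : ℕ))

theorem gr_inj {l n : ℕ} : Function.Injective (gr : (Fin l → Fin n) → Finset (ℕ × ℕ)) := by
  intro w v h
  funext i
  have : ((i : ℕ), (w i : ℕ)) ∈ gr v := h ▸ mem_image_of_mem _ (mem_univ i)
  obtain ⟨j, -, hj⟩ := mem_image.1 this
  simp only [Prod.mk.injEq] at hj
  have : j = i := Fin.ext hj.1
  subst this
  exact Fin.ext hj.2.symm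

theorem wordContains_of_con {l n k : ℕ} {w : Fin l → Fin n} {q : Equiv.Perm (Fin k)}
    (h : Con (gr w) q) : WordContains w q := by
  obtain ⟨f, hf, h1, h2⟩ := h
  have : ∀ i, ∃ j : Fin l, ((j : ℕ), (w j : ℕ)) = f i := fun i => by
    obtain ⟨j, -, hj⟩ := mem_image.1 (hf i)
    exact ⟨j, hj⟩
  choose g hg using this
  have h2' : ∀ a b, q a < q b → w (g a) < w (g b) := fun a b hab => by
    have := h2 a b hab
    rw [← hg, ← hg] at this
    exact this
  refine ⟨g, fun a b hab => ?_, fun a b => ⟨fun hw => ?_, h2' a b⟩⟩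
  · have := h1 a b hab
    rw [← hg, ← hg] at this
    exact this
  · by_contra hle
    rcases (not_lt.1 hle).lt_or_eq with h | h
    · exact absurd (h2' b a h) (not_lt.2 hw.le)
    · have := q.injective h
      subst this
      exact lt_irrefl _ hw

end MSW

/-- Stanley–Wilf for permutations of regular multisets. -/
theorem multiset_stanley_wilf (k : ℕ) (hk : 0 < k) :
    ∃ c : ℕ, 1 ≤ c ∧ ∀ (q : Equiv.Perm (Fin k)) (n m : ℕ), 0 < n → 0 < m →
      Nat.card {w : Fin (n * m) → Fin n // IsRegularWord m w ∧ ¬ WordContains w q} ≤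
        c ^ (n * m) := by
  obtain ⟨C, hC⟩ := MSW.marcus_tardos k
  refine ⟨2 ^ (2 * (4 * C + 1) + C), Nat.one_le_two_pow, fun q n m hn hm => ?_⟩
  have h1 := MSW.fam_step (hC q) (a := n * m) (b := n) (n := n) (s := m) (t := 1) hm one_pos
    le_rfl (by omega)
  have h2 := MSW.klazar (hC q) n
  have h3 : Nat.card {w : Fin (n * m) → Fin n // IsRegularWord m w ∧ ¬ WordContains w q} ≤
      (MSW.Fam q (n * m) n).card := by
    rw [← Nat.card_eq_finsetCard]
    refine Nat.card_le_card_of_injective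
      (fun w => (⟨MSW.gr w.1, MSW.mem_Fam.2 ⟨?_, fun h => w.2.2 (MSW.wordContains_of_con h)⟩⟩ :
        MSW.Fam q (n * m) n)) ?_
    · intro x hx
      obtain ⟨j, -, rfl⟩ := Finset.mem_image.1 hx
      exact Finset.mem_product.2 ⟨Finset.mem_range.2 j.2, Finset.mem_range.2 (w.1 j).2⟩
    · intro w v h
      exact Subtype.ext (MSW.gr_inj (congrArg Subtype.val h))
  refine h3.trans ((h1.trans (Nat.mul_le_mul_left _ h2)).trans ?_)
  rw [← pow_add, ← pow_mul]
  refine Nat.pow_le_pow_right (by norm_num) ?_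
  have : n ≤ n * m := Nat.le_mul_of_pos_right n hm
  nlinarith
end

section
/- For every positive integer k there exists a constant c ≥ 1, depending only on k, such that for every permutation pattern q of length k and every positive integer n, the number S_n(q) of permutations of length n avoiding q satisfies S_n(q) ≤ c^n. -/
/-- Containment of the pattern `q` in a relation on natural numbers. -/
def SWCont {k : ℕ} (R : ℕ → ℕ → Prop) (q : Equiv.Perm (Fin k)) : Prop :=
  ∃ r c : Fin k → ℕ, StrictMono r ∧ StrictMono c ∧ ∀ i, R (r i) (c (q i))

theorem SWCont.of_swap {k : ℕ} {R : ℕ → ℕ → Prop} {q : Equiv.Perm (Fin k)}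
    (h : SWCont (fun x y => R y x) q.symm) : SWCont R q := by
  obtain ⟨r, c, hr, hc, h⟩ := h
  refine ⟨c, r, hc, hr, fun i => ?_⟩
  simpa using h (q i)

theorem SWCont.of_block {k : ℕ} {R : ℕ → ℕ → Prop} {q : Equiv.Perm (Fin k)} (s : ℕ)
    (h : SWCont (fun u v => ∃ x y, R x y ∧ x / s = u ∧ y / s = v) q) : SWCont R q := by
  obtain ⟨r, c, hr, hc, h⟩ := h
  choose x y hR hx hy using h
  refine ⟨x, fun j => y (q.symm j), fun a b hab => ?_, fun a b hab => ?_, fun i => ?_⟩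
  · have h1 := hr hab
    rw [← hx a, ← hx b] at h1
    exact lt_of_not_ge fun h2 => absurd (Nat.div_le_div_right (c := s) h2) (not_le.2 h1)
  · have h1 := hc hab
    have ha := hy (q.symm a)
    have hb := hy (q.symm b)
    rw [Equiv.apply_symm_apply] at ha hb
    rw [← ha, ← hb] at h1
    exact lt_of_not_ge fun h2 => absurd (Nat.div_le_div_right (c := s) h2) (not_le.2 h1)
  · simpa using hR i

theorem sw_wide {k : ℕ} {R : ℕ → ℕ → Prop} {q : Equiv.Perm (Fin k)} (s i : ℕ)
    (hR : ¬ SWCont R q) (J : Finset ℕ)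
    (hJ : ∀ j ∈ J, ∃ S : Finset ℕ, S ⊆ Finset.Ico (i * s) (i * s + s) ∧ S.card = k ∧
      ∀ x ∈ S, ∃ y, y / s = j ∧ R x y) : J.card ≤ k * 2 ^ s := by
  classical
  by_contra hlt
  push Not at hlt
  apply hR
  choose! S hS1 hS2 hS3 using hJ
  have hmaps : ∀ j ∈ J, S j ∈ (Finset.Ico (i * s) (i * s + s)).powerset := fun j hj =>
    Finset.mem_powerset.2 (hS1 j hj)
  have hcard : (Finset.Ico (i * s) (i * s + s)).powerset.card * k < J.card := by
    rw [Finset.card_powerset, Nat.card_Ico, Nat.add_sub_cancel_left, mul_comm]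
    exact hlt
  obtain ⟨T, -, hT⟩ := Finset.exists_lt_card_fiber_of_mul_lt_card_of_maps_to hmaps hcard
  obtain ⟨K, hKsub, hK⟩ := Finset.exists_subset_card_eq hT.le
  have hKJ : ∀ j ∈ K, j ∈ J ∧ S j = T := fun j hj => by simpa using hKsub hj
  rcases Nat.eq_zero_or_pos k with rfl | hk
  · exact ⟨Fin.elim0, Fin.elim0, fun a => a.elim0, fun a => a.elim0, fun a => a.elim0⟩
  have hTk : T.card = k := by
    obtain ⟨j, hj⟩ := Finset.card_pos.1 (hK ▸ hk)
    rw [← (hKJ j hj).2]; exact hS2 j (hKJ j hj).1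
  have key : ∀ a : Fin k, ∃ y, y / s = K.orderEmbOfFin hK (q a) ∧
      R (T.orderEmbOfFin hTk a) y := fun a => by
    have h1 := hKJ _ (Finset.orderEmbOfFin_mem K hK (q a))
    exact hS3 _ h1.1 _ (h1.2 ▸ Finset.orderEmbOfFin_mem T hTk a)
  choose y hy hRy using key
  refine ⟨T.orderEmbOfFin hTk, fun b => y (q.symm b), (T.orderEmbOfFin hTk).strictMono,
    fun a b hab => ?_, fun a => ?_⟩
  · have h1 := (K.orderEmbOfFin hK).strictMono hab
    have ha := hy (q.symm a)
    have hb := hy (q.symm b)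
    rw [Equiv.apply_symm_apply] at ha hb
    rw [← ha, ← hb] at h1
    exact lt_of_not_ge fun h2 => absurd (Nat.div_le_div_right (c := s) h2) (not_le.2 h1)
  · simpa using hRy a

theorem sw_mem_Ico {x s i : ℕ} (hs : 0 < s) (h : x / s = i) :
    x ∈ Finset.Ico (i * s) (i * s + s) := by
  subst h
  rw [Finset.mem_Ico]
  constructor
  · exact Nat.div_mul_le_self x s
  · have := Nat.lt_div_mul_add (a := x) hs
    exact this

/-- the block map -/
def swBlk (s : ℕ) (p : ℕ × ℕ) : ℕ × ℕ := (p.1 / s, p.2 / s)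

theorem sw_block_card (s : ℕ) (hs : 0 < s) (Q : Finset (ℕ × ℕ)) (b : ℕ × ℕ)
    (hQ : ∀ p ∈ Q, swBlk s p = b) : Q.card ≤ s * s := by
  have : Q ⊆ Finset.Ico (b.1 * s) (b.1 * s + s) ×ˢ Finset.Ico (b.2 * s) (b.2 * s + s) := by
    intro p hp
    have h := hQ p hp
    subst h
    exact Finset.mem_product.2 ⟨sw_mem_Ico hs rfl, sw_mem_Ico hs rfl⟩
  simpa [Finset.card_product] using Finset.card_le_card this

theorem sw_block_avoid {k : ℕ} {q : Equiv.Perm (Fin k)} (s : ℕ) {P : Finset (ℕ × ℕ)}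
    (hP : ¬ SWCont (fun x y => (x, y) ∈ P) q) :
    ¬ SWCont (fun x y => (x, y) ∈ P.image (swBlk s)) q := by
  intro h
  apply hP
  apply SWCont.of_block s
  obtain ⟨r, c, hr, hc, h⟩ := h
  refine ⟨r, c, hr, hc, fun i => ?_⟩
  obtain ⟨⟨x, y⟩, hp, he⟩ := Finset.mem_image.1 (h i)
  simp only [swBlk, Prod.mk.injEq] at he
  exact ⟨x, y, hp, he.1, he.2⟩

theorem sw_block_sub (s m : ℕ) {P : Finset (ℕ × ℕ)}
    (hP : P ⊆ Finset.range (m * s) ×ˢ Finset.range (m * s)) :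
    P.image (swBlk s) ⊆ Finset.range m ×ˢ Finset.range m := by
  intro b hb
  obtain ⟨p, hp, rfl⟩ := Finset.mem_image.1 hb
  have := hP hp
  simp only [Finset.mem_product, Finset.mem_range] at this
  simp only [swBlk, Finset.mem_product, Finset.mem_range]
  exact ⟨Nat.div_lt_of_lt_mul (by linarith [this.1, mul_comm m s]),
    Nat.div_lt_of_lt_mul (by linarith [this.2, mul_comm m s])⟩

theorem sw_step {k : ℕ} {q : Equiv.Perm (Fin k)} (s m : ℕ) (hs : 0 < s) (P : Finset (ℕ × ℕ))
    (hP : ¬ SWCont (fun x y => (x, y) ∈ P) q)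
    (hsub : P ⊆ Finset.range (m * s) ×ˢ Finset.range (m * s)) :
    P.card ≤ (P.image (swBlk s)).card * (k * k) + 2 * ((s * s) * (m * (k * 2 ^ s))) := by
  classical
  set B := P.image (swBlk s) with hB
  have hBs : B ⊆ Finset.range m ×ˢ Finset.range m := sw_block_sub s m hsub
  let F : ℕ × ℕ → Finset (ℕ × ℕ) := fun b => P.filter fun p => swBlk s p = b
  have hF : ∀ b p, p ∈ F b ↔ p ∈ P ∧ swBlk s p = b := fun b p => Finset.mem_filter
  let W := B.filter fun b => k ≤ ((F b).image Prod.fst).card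
  let T := B.filter fun b => k ≤ ((F b).image Prod.snd).card
  have hW : W.card ≤ m * (k * 2 ^ s) := by
    have h1 : ∀ b ∈ W, b.1 ∈ Finset.range m := fun b hb =>
      (Finset.mem_product.1 (hBs (Finset.mem_filter.1 hb).1)).1
    have := Finset.card_le_mul_card_image_of_maps_to h1 (k * 2 ^ s) (fun i _ => ?_)
    · rw [Finset.card_range] at this; linarith [mul_comm m (k * 2 ^ s)]
    · rw [← Finset.card_image_of_injOn (f := Prod.snd)]
      · apply sw_wide s i hP
        intro j hj
        obtain ⟨⟨i', j'⟩, hb, rfl⟩ := Finset.mem_image.1 hj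
        obtain ⟨hb0, rfl⟩ := Finset.mem_filter.1 hb
        obtain ⟨S, hS, hSk⟩ := Finset.exists_subset_card_eq (Finset.mem_filter.1 hb0).2
        have hx : ∀ x ∈ S, ∃ y, (x, y) ∈ P ∧ x / s = i' ∧ y / s = j' := fun x hx => by
          obtain ⟨⟨x', y⟩, hp, rfl⟩ := Finset.mem_image.1 (hS hx)
          have h2 := (hF _ _).1 hp
          simp only [swBlk, Prod.mk.injEq] at h2
          exact ⟨y, h2⟩
        refine ⟨S, fun x h => ?_, hSk, fun x h => ?_⟩
        · obtain ⟨y, -, h2, -⟩ := hx x h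
          exact sw_mem_Ico hs h2
        · obtain ⟨y, h1, -, h2⟩ := hx x h
          exact ⟨y, h2, h1⟩
      · intro a ha b hb hab
        have ha := (Finset.mem_filter.1 ha).2
        have hb := (Finset.mem_filter.1 hb).2
        exact Prod.ext (ha.trans hb.symm) hab
  have hT : T.card ≤ m * (k * 2 ^ s) := by
    have hP' : ¬ SWCont (fun y x => (x, y) ∈ P) q.symm := fun h => hP h.of_swap
    have h1 : ∀ b ∈ T, b.2 ∈ Finset.range m := fun b hb =>
      (Finset.mem_product.1 (hBs (Finset.mem_filter.1 hb).1)).2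
    have := Finset.card_le_mul_card_image_of_maps_to h1 (k * 2 ^ s) (fun i _ => ?_)
    · rw [Finset.card_range] at this; linarith [mul_comm m (k * 2 ^ s)]
    · rw [← Finset.card_image_of_injOn (f := Prod.fst)]
      · apply sw_wide s i hP'
        intro j hj
        obtain ⟨⟨j', i'⟩, hb, rfl⟩ := Finset.mem_image.1 hj
        obtain ⟨hb0, rfl⟩ := Finset.mem_filter.1 hb
        obtain ⟨S, hS, hSk⟩ := Finset.exists_subset_card_eq (Finset.mem_filter.1 hb0).2
        have hx : ∀ x ∈ S, ∃ y, (y, x) ∈ P ∧ y / s = j' ∧ x / s = i' := fun x hx => by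
          obtain ⟨⟨y, x'⟩, hp, rfl⟩ := Finset.mem_image.1 (hS hx)
          have h2 := (hF _ _).1 hp
          simp only [swBlk, Prod.mk.injEq] at h2
          exact ⟨y, h2⟩
        refine ⟨S, fun x h => ?_, hSk, fun x h => ?_⟩
        · obtain ⟨y, -, -, h2⟩ := hx x h
          exact sw_mem_Ico hs h2
        · obtain ⟨y, h1, h2, -⟩ := hx x h
          exact ⟨y, h2, h1⟩
      · intro a ha b hb hab
        have ha := (Finset.mem_filter.1 ha).2
        have hb := (Finset.mem_filter.1 hb).2
        exact Prod.ext hab (ha.trans hb.symm)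
  have hsum : P.card = ∑ b ∈ B, (F b).card :=
    Finset.card_eq_sum_card_fiberwise fun p hp => Finset.mem_image_of_mem _ hp
  have hle : ∀ b ∈ B, (F b).card ≤ k * k +
      ((if k ≤ ((F b).image Prod.fst).card then s * s else 0) +
       (if k ≤ ((F b).image Prod.snd).card then s * s else 0)) := by
    intro b _
    have h1 : (F b).card ≤ s * s := sw_block_card s hs (F b) b fun p hp => ((hF b p).1 hp).2
    split_ifs with ha hb hb
    · omega
    · omega
    · omega
    · have h2 : (F b) ⊆ (F b).image Prod.fst ×ˢ (F b).image Prod.snd := fun p hp =>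
        Finset.mem_product.2 ⟨Finset.mem_image_of_mem _ hp, Finset.mem_image_of_mem _ hp⟩
      have h3 := Finset.card_le_card h2
      rw [Finset.card_product] at h3
      have h4 := Nat.mul_le_mul (not_le.1 ha).le (not_le.1 hb).le
      omega
  have h5 := Finset.sum_le_sum hle
  rw [← hsum, Finset.sum_add_distrib, Finset.sum_add_distrib, Finset.sum_const,
    ← Finset.sum_filter, ← Finset.sum_filter, Finset.sum_const, Finset.sum_const,
    smul_eq_mul, smul_eq_mul, smul_eq_mul] at h5
  have h6 : W.card * (s * s) ≤ (m * (k * 2 ^ s)) * (s * s) := Nat.mul_le_mul_right _ hW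
  have h7 : T.card * (s * s) ≤ (m * (k * 2 ^ s)) * (s * s) := Nat.mul_le_mul_right _ hT
  have h8 := mul_comm (m * (k * 2 ^ s)) (s * s)
  simp only [W, T] at h6 h7
  omega

theorem sw_fh_pow (k : ℕ) (hk : 0 < k) (q : Equiv.Perm (Fin k)) (s C : ℕ)
    (hs : s = k * k + 1) (hC : C = 2 * ((s * s) * (k * 2 ^ s))) (t : ℕ) :
    ∀ P : Finset (ℕ × ℕ), ¬ SWCont (fun x y => (x, y) ∈ P) q →
      P ⊆ Finset.range (s ^ t) ×ˢ Finset.range (s ^ t) → P.card ≤ C * s ^ t := by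
  have hs0 : 0 < s := by omega
  have hC0 : 0 < C := by subst hC; positivity
  induction t with
  | zero =>
    intro P _ hsub
    have := Finset.card_le_card hsub
    simp at this
    simp; omega
  | succ t ih =>
    intro P hP hsub
    rw [pow_succ] at hsub
    have h1 := sw_step s (s ^ t) hs0 P hP hsub
    have h2 := ih _ (sw_block_avoid s hP) (sw_block_sub s _ hsub)
    calc P.card ≤ _ := h1
      _ ≤ (C * s ^ t) * (k * k) + 2 * ((s * s) * (s ^ t * (k * 2 ^ s))) := by gcongr
      _ = (C * s ^ t) * (k * k) + C * s ^ t := by rw [hC]; ring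
      _ = C * s ^ t * s := by rw [hs]; ring
      _ = C * s ^ (t + 1) := by ring

theorem sw_exists_pow (s n : ℕ) (hs : 1 < s) (hn : 0 < n) : ∃ t, n ≤ s ^ t ∧ s ^ t ≤ s * n := by
  refine ⟨Nat.log s n + 1, (Nat.lt_pow_succ_log_self hs n).le, ?_⟩
  rw [pow_succ, mul_comm]
  exact Nat.mul_le_mul_left _ (Nat.pow_log_le_self s hn.ne')

theorem sw_fh (k : ℕ) (hk : 0 < k) : ∃ C : ℕ, 0 < C ∧ ∀ (q : Equiv.Perm (Fin k)) (n : ℕ), 0 < n →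
    ∀ P : Finset (ℕ × ℕ), ¬ SWCont (fun x y => (x, y) ∈ P) q →
      P ⊆ Finset.range n ×ˢ Finset.range n → P.card ≤ C * n := by
  obtain ⟨s, hs⟩ : ∃ s, s = k * k + 1 := ⟨_, rfl⟩
  have hs1 : 1 < s := by rw [hs]; have := Nat.mul_pos hk hk; omega
  refine ⟨2 * ((s * s) * (k * 2 ^ s)) * s, by positivity, fun q n hn P hP hsub => ?_⟩
  obtain ⟨t, h1, h2⟩ := sw_exists_pow s n hs1 hn
  have h3 := sw_fh_pow k hk q s _ hs rfl t P hP (hsub.trans (by gcongr))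
  rw [mul_assoc _ s n]
  exact h3.trans (Nat.mul_le_mul_left _ h2)

open Classical in
/-- avoiding point sets in the `n × n` grid -/
noncomputable def swAv {k : ℕ} (q : Equiv.Perm (Fin k)) (n : ℕ) : Finset (Finset (ℕ × ℕ)) :=
  (Finset.range n ×ˢ Finset.range n).powerset.filter fun P => ¬ SWCont (fun x y => (x, y) ∈ P) q

theorem sw_mem_av {k : ℕ} {q : Equiv.Perm (Fin k)} {n : ℕ} {P : Finset (ℕ × ℕ)} :
    P ∈ swAv q n ↔ P ⊆ Finset.range n ×ˢ Finset.range n ∧ ¬ SWCont (fun x y => (x, y) ∈ P) q := by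
  classical
  simp [swAv]

theorem sw_count (k : ℕ) (q : Equiv.Perm (Fin k)) (C : ℕ) (hC : 0 < C)
    (h : ∀ n : ℕ, 0 < n → ∀ P : Finset (ℕ × ℕ), ¬ SWCont (fun x y => (x, y) ∈ P) q →
      P ⊆ Finset.range n ×ˢ Finset.range n → P.card ≤ C * n) (t : ℕ) :
    (swAv q (2 ^ t)).card ≤ 2 ^ (4 * C * 2 ^ t) := by
  classical
  induction t with
  | zero =>
    have h1 : (swAv q (2 ^ 0)).card ≤ _ := Finset.card_filter_le _ _
    rw [Finset.card_powerset] at h1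
    refine h1.trans (Nat.pow_le_pow_right (by norm_num) ?_)
    simp; omega
  | succ t ih =>
    have hm : ∀ P ∈ swAv q (2 ^ (t + 1)), P.image (swBlk 2) ∈ swAv q (2 ^ t) := fun P hP => by
      obtain ⟨h1, h2⟩ := sw_mem_av.1 hP
      rw [pow_succ] at h1
      exact sw_mem_av.2 ⟨sw_block_sub 2 _ h1, sw_block_avoid 2 h2⟩
    have := Finset.card_le_mul_card_image_of_maps_to hm (2 ^ (4 * C * 2 ^ t)) (fun B hB => ?_)
    · refine this.trans ((Nat.mul_le_mul_left _ ih).trans (le_of_eq ?_))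
      rw [← pow_add]
      congr 1
      ring
    · obtain ⟨hB1, hB2⟩ := sw_mem_av.1 hB
      have hBc := h (2 ^ t) (by positivity) B hB2 hB1
      let U := B.biUnion fun b => Finset.Ico (b.1 * 2) (b.1 * 2 + 2) ×ˢ
        Finset.Ico (b.2 * 2) (b.2 * 2 + 2)
      have hU : U.card ≤ B.card * 4 := Finset.card_biUnion_le_card_mul _ _ _ fun b _ => by simp
      have hsub : (swAv q (2 ^ (t + 1))).filter (fun P => P.image (swBlk 2) = B) ⊆ U.powerset := by
        intro P hP
        have hPB := (Finset.mem_filter.1 hP).2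
        refine Finset.mem_powerset.2 fun p hp => Finset.mem_biUnion.2 ⟨swBlk 2 p, ?_, ?_⟩
        · rw [← hPB]; exact Finset.mem_image_of_mem _ hp
        · exact Finset.mem_product.2 ⟨sw_mem_Ico two_pos rfl, sw_mem_Ico two_pos rfl⟩
      refine (Finset.card_le_card hsub).trans ?_
      rw [Finset.card_powerset]
      refine Nat.pow_le_pow_right (by norm_num) (hU.trans ?_)
      linarith

/-- graph of a permutation as a set of points -/
def swGraph {n : ℕ} (p : Equiv.Perm (Fin n)) : Finset (ℕ × ℕ) :=
  Finset.univ.image fun i : Fin n => ((i : ℕ), (p i : ℕ))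

theorem sw_mem_graph {n : ℕ} {p : Equiv.Perm (Fin n)} {x y : ℕ} :
    (x, y) ∈ swGraph p ↔ ∃ i : Fin n, (i : ℕ) = x ∧ (p i : ℕ) = y := by
  simp [swGraph]

theorem sw_graph_inj {n : ℕ} : Function.Injective (swGraph (n := n)) := by
  intro p p' h
  ext i
  have h1 : ((i : ℕ), (p i : ℕ)) ∈ swGraph p' := h ▸ sw_mem_graph.2 ⟨i, rfl, rfl⟩
  obtain ⟨j, hj, hj'⟩ := sw_mem_graph.1 h1
  have : j = i := Fin.ext hj
  subst this
  exact hj'.symm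

theorem sw_graph_cont {n k : ℕ} {p : Equiv.Perm (Fin n)} {q : Equiv.Perm (Fin k)}
    (h : SWCont (fun x y => (x, y) ∈ swGraph p) q) : PermContains p q := by
  obtain ⟨r, c, hr, hc, h⟩ := h
  simp only [sw_mem_graph] at h
  choose f hf hf' using h
  refine ⟨f, fun a b hab => ?_, fun a b => ?_⟩
  · rw [Fin.lt_def, hf, hf]; exact hr hab
  · rw [Fin.lt_def, hf', hf']; exact hc.lt_iff_lt

/-- The Stanley–Wilf conjecture (Marcus–Tardos theorem). -/
theorem stanley_wilf (k : ℕ) (hk : 0 < k) :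
    ∃ c : ℕ, 1 ≤ c ∧ ∀ (q : Equiv.Perm (Fin k)) (n : ℕ), 0 < n →
      Nat.card {p : Equiv.Perm (Fin n) // ¬ PermContains p q} ≤ c ^ n := by
  obtain ⟨C, hC, h⟩ := sw_fh k hk
  refine ⟨2 ^ (4 * C * 2), Nat.one_le_two_pow, fun q n hn => ?_⟩
  obtain ⟨t, h1, h2⟩ := sw_exists_pow 2 n (by norm_num) hn
  have hcount := sw_count k q C hC (h q) t
  let φ : {p : Equiv.Perm (Fin n) // ¬ PermContains p q} → swAv q (2 ^ t) := fun p =>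
    ⟨swGraph p.1, sw_mem_av.2 ⟨fun ⟨x, y⟩ hx => by
      obtain ⟨i, rfl, rfl⟩ := sw_mem_graph.1 hx
      exact Finset.mem_product.2 ⟨Finset.mem_range.2 (i.2.trans_le h1),
        Finset.mem_range.2 ((p.1 i).2.trans_le h1)⟩, fun hc => p.2 (sw_graph_cont hc)⟩⟩
  have hφ : Function.Injective φ := fun a b hab =>
    Subtype.ext (sw_graph_inj (congrArg Subtype.val hab))
  have h3 := Nat.card_le_card_of_injective φ hφ
  rw [Nat.card_eq_fintype_card (α := swAv q (2 ^ t)), Fintype.card_coe] at h3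
  refine h3.trans (hcount.trans ?_)
  rw [← pow_mul, mul_assoc (4 * C)]
  exact Nat.pow_le_pow_right (by norm_num) (Nat.mul_le_mul_left _ h2)
end

section
/- For every k×k permutation matrix Q there exists a constant d such that for all positive integers n, every n×n 0-1 matrix that avoids Q has at most d·n entries equal to 1. -/
/-- Containment of a permutation in a finite set of grid points. -/
def FHCont {k : ℕ} (S : Finset (ℕ × ℕ)) (q : Equiv.Perm (Fin k)) : Prop :=
  ∃ r c : Fin k → ℕ, StrictMono r ∧ StrictMono c ∧ ∀ i, (r i, c (q i)) ∈ S

/-- The block containing a point. -/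
def fhBlk (m : ℕ) (p : ℕ × ℕ) : ℕ × ℕ := (p.1 / m, p.2 / m)

/-- Points of `S` in the block `b`. -/
def fhPts (S : Finset (ℕ × ℕ)) (m : ℕ) (b : ℕ × ℕ) : Finset (ℕ × ℕ) :=
  S.filter fun p => fhBlk m p = b

theorem fh_mem_pts {S : Finset (ℕ × ℕ)} {m : ℕ} {b p : ℕ × ℕ} :
    p ∈ fhPts S m b ↔ p ∈ S ∧ fhBlk m p = b := by
  rw [fhPts, Finset.mem_filter]

/-- Columns of points of `S` in the block `b`. -/
def fhCols (S : Finset (ℕ × ℕ)) (m : ℕ) (b : ℕ × ℕ) : Finset ℕ :=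
  (fhPts S m b).image Prod.snd

/-- Rows of points of `S` in the block `b`. -/
def fhRows (S : Finset (ℕ × ℕ)) (m : ℕ) (b : ℕ × ℕ) : Finset ℕ :=
  (fhPts S m b).image Prod.fst

theorem fh_lt_of_div_lt {m x y : ℕ} (h : x / m < y / m) : x < y := by
  by_contra hc
  have := Nat.div_le_div_right (c := m) (not_lt.mp hc)
  omega

theorem fh_contract {k m : ℕ} (S : Finset (ℕ × ℕ)) (q : Equiv.Perm (Fin k))
    (h : FHCont (S.image (fhBlk m)) q) : FHCont S q := by
  obtain ⟨r, c, hr, hc, h⟩ := h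
  have h' : ∀ i, ∃ p ∈ S, fhBlk m p = (r i, c (q i)) := fun i => by
    simpa only [Finset.mem_image] using h i
  choose p hp hpb using h'
  refine ⟨fun i => (p i).1, fun j => (p (q.symm j)).2, ?_, ?_, ?_⟩
  · intro i j hij
    have h1 := congrArg Prod.fst (hpb i)
    have h2 := congrArg Prod.fst (hpb j)
    have := hr hij
    simp only [fhBlk] at h1 h2
    exact fh_lt_of_div_lt (m := m) (by rw [h1, h2]; exact this)
  · intro i j hij
    have h1 := congrArg Prod.snd (hpb (q.symm i))
    have h2 := congrArg Prod.snd (hpb (q.symm j))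
    have := hc hij
    simp only [fhBlk, Equiv.apply_symm_apply] at h1 h2
    exact fh_lt_of_div_lt (m := m) (by rw [h1, h2]; exact this)
  · intro i
    simpa using hp i

theorem fh_wide {k m N : ℕ} (hk : 0 < k) (hm : 0 < m) (S : Finset (ℕ × ℕ))
    (q : Equiv.Perm (Fin k)) (hS : ¬ FHCont S q) (B : Finset (ℕ × ℕ))
    (hB : ∀ b ∈ B, b.2 < N) :
    (B.filter fun b => k ≤ (fhCols S m b).card).card ≤ k * (N * 2 ^ m) := by
  classical
  let T : Finset (Finset ℕ) :=
    (Finset.range N).biUnion fun b => (Finset.Ico (b * m) (b * m + m)).powerset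
  have hT : T.card ≤ N * 2 ^ m := by
    have := Finset.card_biUnion_le_card_mul (Finset.range N)
      (fun b => (Finset.Ico (b * m) (b * m + m)).powerset) (2 ^ m) (by
        intro b _
        simp [Finset.card_powerset])
    simpa using this
  have hcol : ∀ b : ℕ × ℕ, ∀ y ∈ fhCols S m b, y / m = b.2 := by
    intro b y hy
    simp only [fhCols, Finset.mem_image, fh_mem_pts, fhBlk] at hy
    obtain ⟨p, ⟨_, hp⟩, rfl⟩ := hy
    rw [← hp]
  refine (Finset.card_le_mul_card_image_of_maps_to (f := fhCols S m) (t := T) ?_ k ?_).trans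
    (Nat.mul_le_mul_left k hT)
  · intro b hb
    rw [Finset.mem_filter] at hb
    simp only [T, Finset.mem_biUnion, Finset.mem_range, Finset.mem_powerset]
    refine ⟨b.2, hB b hb.1, ?_⟩
    intro y hy
    have h1 := hcol b y hy
    have h2 := Nat.div_add_mod y m
    have h3 := Nat.mod_lt y hm
    rw [h1, mul_comm] at h2
    rw [Finset.mem_Ico]
    omega
  · intro t _
    by_contra hlt
    push Not at hlt
    set F := (B.filter fun b => k ≤ (fhCols S m b).card).filter fun b => fhCols S m b = t with hF
    have hFm : ∀ b ∈ F, fhCols S m b = t ∧ k ≤ t.card := by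
      intro b hb
      rw [hF, Finset.mem_filter, Finset.mem_filter] at hb
      exact ⟨hb.2, hb.2 ▸ hb.1.2⟩
    obtain ⟨b0, hb0⟩ : F.Nonempty := Finset.card_pos.mp (by omega)
    have htc := (hFm b0 hb0).2
    obtain ⟨y0, hy0⟩ : t.Nonempty := Finset.card_pos.mp (by omega)
    have hsnd : ∀ b ∈ F, b.2 = y0 / m := fun b hb =>
      (hcol b y0 ((hFm b hb).1 ▸ hy0)).symm
    have hinj : (F.image Prod.fst).card = F.card := by
      apply Finset.card_image_of_injOn
      intro b hb b' hb' h
      exact Prod.ext h ((hsnd b hb).trans (hsnd b' hb').symm)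
    have hA : k ≤ (F.image Prod.fst).card := by omega
    let a := Finset.orderEmbOfCardLe _ hA
    let c := Finset.orderEmbOfCardLe _ htc
    have hac : ∀ i, ∃ x, (x, c (q i)) ∈ S ∧ x / m = a i := by
      intro i
      have h1 : a i ∈ F.image Prod.fst := Finset.orderEmbOfCardLe_mem _ hA i
      have h2 : c (q i) ∈ t := Finset.orderEmbOfCardLe_mem _ htc (q i)
      obtain ⟨b, hb, hba⟩ := Finset.mem_image.mp h1
      rw [← (hFm b hb).1] at h2
      simp only [fhCols, Finset.mem_image, fh_mem_pts, fhBlk] at h2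
      obtain ⟨p, ⟨hp, hpb⟩, hpc⟩ := h2
      refine ⟨p.1, ?_, ?_⟩
      · rw [← hpc]; exact hp
      · rw [← hba, ← hpb]
    choose r hr hra using hac
    refine hS ⟨r, c, ?_, c.strictMono, hr⟩
    intro i j hij
    apply fh_lt_of_div_lt (m := m)
    rw [hra, hra]
    exact a.strictMono hij

theorem fh_swap_cont {k : ℕ} (S : Finset (ℕ × ℕ)) (q : Equiv.Perm (Fin k))
    (h : FHCont (S.image Prod.swap) q.symm) : FHCont S q := by
  obtain ⟨r, c, hr, hc, h⟩ := h
  refine ⟨c, r, hc, hr, fun i => ?_⟩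
  have := h (q i)
  simpa using this

theorem fh_swap_rows (S : Finset (ℕ × ℕ)) (m : ℕ) (b : ℕ × ℕ) :
    fhCols (S.image Prod.swap) m b.swap = fhRows S m b := by
  ext y
  simp only [fhCols, fhRows, Finset.mem_image, fh_mem_pts, fhBlk]
  constructor
  · rintro ⟨p, ⟨⟨p', h1, rfl⟩, h2⟩, rfl⟩
    refine ⟨p', ⟨h1, ?_⟩, rfl⟩
    simp only [Prod.ext_iff, Prod.fst_swap, Prod.snd_swap] at h2 ⊢
    exact ⟨h2.2, h2.1⟩
  · rintro ⟨p, ⟨h1, h2⟩, rfl⟩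
    refine ⟨p.swap, ⟨⟨p, h1, rfl⟩, ?_⟩, rfl⟩
    simp only [Prod.ext_iff, Prod.fst_swap, Prod.snd_swap] at h2 ⊢
    exact ⟨h2.2, h2.1⟩

theorem fh_tall {k m N : ℕ} (hk : 0 < k) (hm : 0 < m) (S : Finset (ℕ × ℕ))
    (q : Equiv.Perm (Fin k)) (hS : ¬ FHCont S q) (B : Finset (ℕ × ℕ))
    (hB : ∀ b ∈ B, b.1 < N) :
    (B.filter fun b => k ≤ (fhRows S m b).card).card ≤ k * (N * 2 ^ m) := by
  classical
  have h := fh_wide (N := N) hk hm (S.image Prod.swap) q.symm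
    (fun h => hS (fh_swap_cont S q h)) (B.image Prod.swap) (by
      intro b hb
      obtain ⟨b', hb', rfl⟩ := Finset.mem_image.mp hb
      exact hB b' hb')
  refine le_trans ?_ h
  apply Finset.card_le_card_of_injOn Prod.swap
  · intro b hb
    simp only [Finset.coe_filter, Set.mem_ofPred_eq] at hb
    simp only [Finset.coe_filter, Set.mem_ofPred_eq]
    refine ⟨Finset.mem_image_of_mem _ hb.1, ?_⟩
    rw [fh_swap_rows]
    exact hb.2
  · exact Prod.swap_injective.injOn

theorem fh_pts_sub (S : Finset (ℕ × ℕ)) (m : ℕ) (b : ℕ × ℕ) :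
    fhPts S m b ⊆ fhRows S m b ×ˢ fhCols S m b := by
  intro p hp
  exact Finset.mem_product.mpr
    ⟨Finset.mem_image_of_mem Prod.fst hp, Finset.mem_image_of_mem Prod.snd hp⟩

theorem fh_div_card {m a : ℕ} (hm : 0 < m) (T : Finset ℕ) (h : ∀ x ∈ T, x / m = a) :
    T.card ≤ m := by
  have : T ⊆ Finset.Ico (a * m) (a * m + m) := by
    intro y hy
    have h1 := h y hy
    have h2 := Nat.div_add_mod y m
    have h3 := Nat.mod_lt y hm
    rw [h1, mul_comm] at h2
    rw [Finset.mem_Ico]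
    omega
  simpa using Finset.card_le_card this

theorem fh_pts_card {k m : ℕ} (hm : 0 < m) (S : Finset (ℕ × ℕ)) (b : ℕ × ℕ) :
    (fhPts S m b).card ≤ k * k + ((if k ≤ (fhCols S m b).card then m * m else 0) +
      (if k ≤ (fhRows S m b).card then m * m else 0)) := by
  have h0 := Finset.card_le_card (fh_pts_sub S m b)
  rw [Finset.card_product] at h0
  have hc : (fhCols S m b).card ≤ m := by
    apply fh_div_card (a := b.2) hm
    intro y hy
    simp only [fhCols, Finset.mem_image, fh_mem_pts, fhBlk] at hy
    obtain ⟨p, ⟨_, hp⟩, rfl⟩ := hy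
    rw [← hp]
  have hr : (fhRows S m b).card ≤ m := by
    apply fh_div_card (a := b.1) hm
    intro y hy
    simp only [fhRows, Finset.mem_image, fh_mem_pts, fhBlk] at hy
    obtain ⟨p, ⟨_, hp⟩, rfl⟩ := hy
    rw [← hp]
  have hmm := Nat.mul_le_mul hr hc
  split_ifs with h1 h2 h2
  · omega
  · omega
  · omega
  · have := Nat.mul_le_mul (not_le.mp h2).le (not_le.mp h1).le
    omega

theorem fh_step {k m N : ℕ} (hk : 0 < k) (hm : 0 < m) (S : Finset (ℕ × ℕ))
    (q : Equiv.Perm (Fin k)) (hS : ¬ FHCont S q)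
    (hB : ∀ b ∈ S.image (fhBlk m), b.1 < N ∧ b.2 < N) :
    S.card ≤ k * k * (S.image (fhBlk m)).card + 2 * (m * m * (k * (N * 2 ^ m))) := by
  classical
  have h1 : S.card = ∑ b ∈ S.image (fhBlk m), (fhPts S m b).card :=
    Finset.card_eq_sum_card_fiberwise (fun p hp => Finset.mem_image_of_mem _ hp)
  have hw := fh_wide hk hm S q hS (S.image (fhBlk m)) (fun b hb => (hB b hb).2)
  have ht := fh_tall hk hm S q hS (S.image (fhBlk m)) (fun b hb => (hB b hb).1)
  have h2 := Finset.sum_le_sum (fun b (_ : b ∈ S.image (fhBlk m)) => fh_pts_card (k := k) hm S b)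
  rw [← h1, Finset.sum_add_distrib, Finset.sum_add_distrib, ← Finset.sum_filter,
    ← Finset.sum_filter] at h2
  simp only [Finset.sum_const, smul_eq_mul] at h2
  have hw' := Nat.mul_le_mul_left (m * m) hw
  have ht' := Nat.mul_le_mul_left (m * m) ht
  linarith [h2, hw', ht']

theorem fh_main {k : ℕ} (hk : 0 < k) (q : Equiv.Perm (Fin k)) :
    ∃ d : ℕ, ∀ n : ℕ, ∀ S : Finset (ℕ × ℕ), (∀ p ∈ S, p.1 < n ∧ p.2 < n) →
      ¬ FHCont S q → S.card ≤ d * n := by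
  obtain ⟨K, hK⟩ : ∃ K, K = k * k := ⟨_, rfl⟩
  have hKpos : 0 < K := hK ▸ Nat.mul_pos hk hk
  obtain ⟨m, hm⟩ : ∃ m, m = 4 * K := ⟨_, rfl⟩
  obtain ⟨C, hC⟩ : ∃ C, C = 2 * (m * m * (k * 2 ^ m)) := ⟨_, rfl⟩
  refine ⟨2 * C + 4 * K, fun n => ?_⟩
  induction n using Nat.strong_induction_on with
  | _ n ih =>
    intro S hn hS
    by_cases hsmall : n < 4 * K
    · have hsub : S ⊆ Finset.range n ×ˢ Finset.range n := by
        intro p hp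
        simpa using hn p hp
      have := Finset.card_le_card hsub
      rw [Finset.card_product, Finset.card_range] at this
      nlinarith
    · push Not at hsmall
      have hmpos : 0 < m := by omega
      have hdm : m * (n / m) ≤ n := Nat.mul_div_le n m
      set N := n / m + 1 with hN
      have hB : ∀ b ∈ S.image (fhBlk m), b.1 < N ∧ b.2 < N := by
        intro b hb
        obtain ⟨p, hp, rfl⟩ := Finset.mem_image.mp hb
        have := hn p hp
        exact ⟨Nat.lt_succ_of_le (Nat.div_le_div_right this.1.le),
          Nat.lt_succ_of_le (Nat.div_le_div_right this.2.le)⟩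
      have hNK : 2 * (K * N) ≤ n := by
        have : 4 * (K * (n / m)) ≤ n := by rw [← mul_assoc, ← hm]; exact hdm
        rw [hN, mul_add]
        omega
      have hNn : N < n := by nlinarith
      have h1 := ih N hNn (S.image (fhBlk m)) hB (fun h => hS (fh_contract S q h))
      have h2 := fh_step hk hmpos S q hS hB
      rw [← hK] at h2
      have h3 : 2 * (m * m * (k * (N * 2 ^ m))) = C * N := by rw [hC]; ring
      rw [h3] at h2
      have h4 := Nat.mul_le_mul_left K h1
      have h5 : C * N ≤ C * n := Nat.mul_le_mul_left C hNn.le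
      have h6 := Nat.mul_le_mul_left (C + 2 * K) hNK
      nlinarith [Nat.zero_le (K * n)]

/-- The Füredi–Hajnal conjecture. -/
theorem furedi_hajnal (k : ℕ) (Q : Fin k → Fin k → Bool)
    (hrow : ∀ i, ∃! j, Q i j = true) (hcol : ∀ j, ∃! i, Q i j = true) :
    ∃ d : ℕ, ∀ n : ℕ, 0 < n → ∀ P : Fin n → Fin n → Bool,
      ¬ MatContains P Q → oneEntries P ≤ d * n := by
  rcases Nat.eq_zero_or_pos k with rfl | hk
  · exact ⟨0, fun n _ P h => absurd
      ⟨fun i => i.elim0, fun i => i.elim0, fun i => i.elim0, fun i => i.elim0,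
        fun i => i.elim0⟩ h⟩
  choose f hf hfu using hrow
  have hinj : Function.Injective f := by
    intro i i' h
    have h2 := hf i'
    simp only at h2
    rw [← h] at h2
    exact (hcol (f i)).unique (hf i) h2
  let q : Equiv.Perm (Fin k) := Equiv.ofBijective f (Finite.injective_iff_bijective.mp hinj)
  obtain ⟨d, hd⟩ := fh_main hk q
  refine ⟨d, fun n _ P hP => ?_⟩
  let g : Fin n × Fin n → ℕ × ℕ := fun p => ((p.1 : ℕ), (p.2 : ℕ))
  have hg : Function.Injective g := by
    intro p p' h
    simp only [g, Prod.ext_iff] at h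
    exact Prod.ext (Fin.ext h.1) (Fin.ext h.2)
  have := hd n ((Finset.univ.filter fun ij : Fin n × Fin n => P ij.1 ij.2 = true).image g) ?_ ?_
  · rwa [Finset.card_image_of_injective _ hg] at this
  · intro p hp
    obtain ⟨p', _, rfl⟩ := Finset.mem_image.mp hp
    exact ⟨p'.1.2, p'.2.2⟩
  · rintro ⟨r, c, hr, hc, h⟩
    apply hP
    have h' : ∀ i, ∃ p : Fin n × Fin n, P p.1 p.2 = true ∧ (p.1 : ℕ) = r i ∧
        (p.2 : ℕ) = c (q i) := by
      intro i
      obtain ⟨p, hp, hpe⟩ := Finset.mem_image.mp (h i)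
      simp only [g, Prod.ext_iff] at hpe
      exact ⟨p, (Finset.mem_filter.mp hp).2, hpe⟩
    choose p hp hp1 hp2 using h'
    refine ⟨fun i => (p i).1, fun j => (p (q.symm j)).2, ?_, ?_, ?_⟩
    · intro i j hij
      rw [Fin.lt_def, hp1, hp1]
      exact hr hij
    · intro i j hij
      rw [Fin.lt_def, hp2, hp2]
      simpa using hc hij
    · intro i j hij
      have : j = q i := hfu i j hij
      subst this
      simpa using hp i
end

section
/- Let q be a permutation of length k with permutation matrix M_q, and suppose d is a constant such that for every positive integer n, every n×n 0-1 matrix avoiding M_q has at most d·n entries equal to 1. Then for every positive integer n, the number S_n(q) of permutations of length n avoiding the pattern q satisfies S_n(q) ≤ 15^(2·d·n). -/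
open Classical in
/-- The 0-1 matrices of size `N` avoiding the permutation matrix of `q`. -/
noncomputable def avoiders {k : ℕ} (q : Equiv.Perm (Fin k)) (N : ℕ) :
    Finset (Fin N → Fin N → Bool) :=
  Finset.univ.filter fun P => ¬ MatContains P (permMatrix q)

/-- The 2×2 block of `P` at position `(i, j)`. -/
def blk {N : ℕ} (P : Fin (N * 2) → Fin (N * 2) → Bool) (ij : Fin N × Fin N) :
    Fin 2 × Fin 2 → Bool :=
  fun xy => P (finProdFinEquiv (ij.1, xy.1)) (finProdFinEquiv (ij.2, xy.2))

/-- Contract every 2×2 block of `P` to one entry. -/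
def contr {N : ℕ} (P : Fin (N * 2) → Fin (N * 2) → Bool) : Fin N → Fin N → Bool :=
  fun i j => decide (∃ xy, blk P (i, j) xy = true)

lemma blk_lt {N : ℕ} {i j : Fin N} (h : i < j) (x y : Fin 2) :
    (finProdFinEquiv (i, x) : Fin (N * 2)) < finProdFinEquiv (j, y) := by
  rw [Fin.lt_def] at h ⊢
  simp only [finProdFinEquiv_apply_val]
  omega

lemma contr_contains {k N : ℕ} (q : Equiv.Perm (Fin k))
    (P : Fin (N * 2) → Fin (N * 2) → Bool)
    (h : MatContains (contr P) (permMatrix q)) : MatContains P (permMatrix q) := by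
  obtain ⟨r, c, hr, hc, hP⟩ := h
  have h1 : ∀ a : Fin k, ∃ xy, blk P (r a, c (q a)) xy = true := by
    intro a
    have := hP a (q a) (by simp [permMatrix])
    simpa only [contr, decide_eq_true_eq] using this
  choose xy hxy using h1
  refine ⟨fun a => finProdFinEquiv (r a, (xy a).1),
    fun b => finProdFinEquiv (c b, (xy (q.symm b)).2),
    fun a b hab => blk_lt (hr hab) _ _, fun a b hab => blk_lt (hc hab) _ _, ?_⟩
  intro i j hij
  simp only [permMatrix, decide_eq_true_eq] at hij
  subst hij
  simpa [blk] using hxy i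

lemma blk_injective {N : ℕ} :
    Function.Injective (blk : (Fin (N * 2) → Fin (N * 2) → Bool) → _) := by
  intro P P' h
  funext a b
  obtain ⟨⟨i, x⟩, rfl⟩ := finProdFinEquiv.surjective a
  obtain ⟨⟨j, y⟩, rfl⟩ := finProdFinEquiv.surjective b
  exact congrFun (congrFun h (i, j)) (x, y)

lemma fibre_card {N : ℕ} (s : Finset (Fin (N * 2) → Fin (N * 2) → Bool))
    (C : Fin N → Fin N → Bool) :
    (s.filter fun P => contr P = C).card ≤ 15 ^ oneEntries C := by
  let F : Fin N × Fin N → Finset (Fin 2 × Fin 2 → Bool) := fun ij =>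
    if C ij.1 ij.2 = true then Finset.univ.filter (fun f => f ≠ fun _ => false)
    else {fun _ => false}
  have h15 : (Finset.univ.filter
      (fun f : Fin 2 × Fin 2 → Bool => f ≠ fun _ => false)).card = 15 := by
    rw [Finset.filter_ne', Finset.card_erase_of_mem (Finset.mem_univ _)]
    simp
  have hF : (Fintype.piFinset F).card = 15 ^ oneEntries C := by
    rw [Fintype.card_piFinset]
    have : ∀ ij, (F ij).card = if C ij.1 ij.2 = true then 15 else 1 := by
      intro ij
      by_cases h : C ij.1 ij.2 = true
      · simp only [F, h, if_true]; exact h15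
      · simp [F, h]
    simp only [this]
    rw [Finset.prod_ite]
    simp [oneEntries]
  rw [← hF]
  refine Finset.card_le_card_of_injOn blk ?_ blk_injective.injOn
  intro P hP
  have hP2 : contr P = C := (Finset.mem_filter.mp hP).2
  subst hP2
  refine Fintype.mem_piFinset.mpr fun ij => ?_
  by_cases h : contr P ij.1 ij.2 = true
  · simp only [F, h, if_true, Finset.mem_filter, Finset.mem_univ, true_and]
    intro h0
    simp [contr, h0] at h
  · simp only [F, h]
    simp only [contr, decide_eq_true_eq, not_exists, Bool.not_eq_true] at h
    simp only [Bool.false_eq_true, if_false, Finset.mem_singleton]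
    funext xy
    exact h xy

lemma avoiders_double {k : ℕ} (q : Equiv.Perm (Fin k)) (d : ℕ)
    (hd : ∀ n : ℕ, 0 < n → ∀ P : Fin n → Fin n → Bool,
      ¬ MatContains P (permMatrix q) → oneEntries P ≤ d * n) (N : ℕ) (hN : 0 < N) :
    (avoiders q (N * 2)).card ≤ 15 ^ (d * N) * (avoiders q N).card := by
  classical
  refine Finset.card_le_mul_card_image_of_maps_to (f := contr) ?_ _ ?_
  · intro P hP
    simp only [avoiders, Finset.mem_filter, Finset.mem_univ, true_and, Finset.coe_filter,
      Set.mem_setOf_eq] at hP ⊢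
    exact fun h => hP (contr_contains q P h)
  · intro C hC
    simp only [avoiders, Finset.mem_filter, Finset.mem_univ, true_and] at hC
    refine le_trans ?_ (Nat.pow_le_pow_right (by norm_num) (hd N hN C hC))
    convert fibre_card (avoiders q (N * 2)) C

lemma avoiders_one {k : ℕ} (q : Equiv.Perm (Fin k)) (d : ℕ)
    (hd : ∀ n : ℕ, 0 < n → ∀ P : Fin n → Fin n → Bool,
      ¬ MatContains P (permMatrix q) → oneEntries P ≤ d * n) :
    (avoiders q 1).card ≤ 15 ^ d := by
  rcases Nat.eq_zero_or_pos d with rfl | hpos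
  · rw [pow_zero, Finset.card_le_one]
    have h0 : ∀ P ∈ avoiders q 1, P = fun _ _ => false := by
      intro P hP
      simp only [avoiders, Finset.mem_filter, Finset.mem_univ, true_and] at hP
      have := hd 1 one_pos P hP
      simp only [oneEntries, zero_mul, Nat.le_zero, Finset.card_eq_zero,
        Finset.filter_eq_empty_iff, Finset.mem_univ, true_imp_iff] at this
      funext i j
      simpa using @this (i, j)
    intro a ha b hb
    rw [h0 a ha, h0 b hb]
  · calc (avoiders q 1).card ≤ (Finset.univ : Finset (Fin 1 → Fin 1 → Bool)).card :=
          Finset.card_le_card (Finset.subset_univ _)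
      _ ≤ 15 ^ 1 := by simp
      _ ≤ 15 ^ d := Nat.pow_le_pow_right (by norm_num) hpos

lemma avoiders_two_pow {k : ℕ} (q : Equiv.Perm (Fin k)) (d : ℕ)
    (hd : ∀ n : ℕ, 0 < n → ∀ P : Fin n → Fin n → Bool,
      ¬ MatContains P (permMatrix q) → oneEntries P ≤ d * n) (m : ℕ) :
    (avoiders q (2 ^ m)).card ≤ 15 ^ (d * 2 ^ m) := by
  induction m with
  | zero => simpa using avoiders_one q d hd
  | succ m ih =>
    rw [pow_succ]
    refine (avoiders_double q d hd (2 ^ m) (by positivity)).trans ?_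
    refine (Nat.mul_le_mul_left _ ih).trans (le_of_eq ?_)
    rw [← pow_add]
    congr 1
    ring

/-- The permutation matrix of `p`, padded by zeros to size `N`. -/
def padded {n : ℕ} (N : ℕ) (p : Equiv.Perm (Fin n)) : Fin N → Fin N → Bool :=
  fun i j => decide (∃ a : Fin n, (a : ℕ) = i ∧ ((p a : Fin n) : ℕ) = j)

lemma padded_injective {n N : ℕ} (h : n ≤ N) :
    Function.Injective (padded N : Equiv.Perm (Fin n) → _) := by
  intro p p' hp
  ext a
  have h1 : padded N p (Fin.castLE h a) (Fin.castLE h (p a)) = true := by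
    simp only [padded, decide_eq_true_eq]
    exact ⟨a, rfl, rfl⟩
  rw [hp] at h1
  simp only [padded, decide_eq_true_eq] at h1
  obtain ⟨b, hb, hb'⟩ := h1
  have : b = a := Fin.ext (by simpa using hb)
  subst this
  simpa using hb'.symm

lemma padded_contains {n N k : ℕ} (p : Equiv.Perm (Fin n)) (q : Equiv.Perm (Fin k))
    (h : MatContains (padded N p) (permMatrix q)) : PermContains p q := by
  obtain ⟨r, c, hr, hc, hP⟩ := h
  have h1 : ∀ i : Fin k, ∃ a : Fin n, (a : ℕ) = r i ∧ ((p a : Fin n) : ℕ) = c (q i) := by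
    intro i
    have := hP i (q i) (by simp [permMatrix])
    simpa only [padded, decide_eq_true_eq] using this
  choose f hf hf' using h1
  refine ⟨f, ?_, ?_⟩
  · intro a b hab
    rw [Fin.lt_def, hf, hf]
    exact hr hab
  · intro a b
    rw [Fin.lt_def, hf', hf', ← Fin.lt_def]
    exact hc.lt_iff_lt

/-- Klazar: Füredi–Hajnal implies Stanley–Wilf with constant `15 ^ (2 d)`. -/
theorem klazar_reduction (k : ℕ) (q : Equiv.Perm (Fin k)) (d : ℕ)
    (hd : ∀ n : ℕ, 0 < n → ∀ P : Fin n → Fin n → Bool,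
      ¬ MatContains P (permMatrix q) → oneEntries P ≤ d * n)
    (n : ℕ) (hn : 0 < n) :
    Nat.card {p : Equiv.Perm (Fin n) // ¬ PermContains p q} ≤ 15 ^ (2 * d * n) := by
  have hlt : 2 ^ Nat.clog 2 n ≤ 2 * n := by
    rcases Nat.lt_or_ge 1 n with h1 | h1
    · have h2 := Nat.pow_pred_clog_lt_self (b := 2) (by norm_num) h1
      have h3 : 0 < Nat.clog 2 n := Nat.clog_pos (by norm_num) h1
      obtain ⟨m, hm⟩ := Nat.exists_eq_succ_of_ne_zero h3.ne'
      rw [hm] at h2 ⊢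
      simp only [Nat.pred_succ, Nat.succ_eq_add_one, pow_succ] at h2 ⊢
      omega
    · have : n = 1 := by omega
      subst this
      simp
  have hle : n ≤ 2 ^ Nat.clog 2 n := Nat.le_pow_clog (by norm_num) n
  have hinj : Nat.card {p : Equiv.Perm (Fin n) // ¬ PermContains p q} ≤
      Nat.card (avoiders q (2 ^ Nat.clog 2 n)) := by
    refine Nat.card_le_card_of_injective
      (fun p => ⟨padded _ p.1, ?_⟩) ?_
    · simp only [avoiders, Finset.mem_filter, Finset.mem_univ, true_and]
      exact fun h => p.2 (padded_contains p.1 q h)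
    · intro p p' h
      exact Subtype.ext (padded_injective hle (congrArg Subtype.val h))
  refine hinj.trans ?_
  rw [Nat.card_eq_fintype_card, Fintype.card_coe]
  refine (avoiders_two_pow q d hd _).trans (Nat.pow_le_pow_right (by norm_num) ?_)
  calc d * 2 ^ Nat.clog 2 n ≤ d * (2 * n) := Nat.mul_le_mul_left _ hlt
    _ = 2 * d * n := by ring
end

section
/- Let q be a permutation of length k and let w be a permutation of the regular multiset [n]_m (a word of length n·m over {1,…,n} with each letter occurring exactly m times). If w avoids the pattern q, then the bipartite graph G_w on ([n·m],[n]) associated to w avoids the bipartite graph G_q associated to q as an ordered subgraph. -/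
/-- If a multiset permutation `w` avoids `q`, then `G_w` avoids `G_q`. -/
theorem word_avoid_imp_graph_avoid {k n m : ℕ} (q : Equiv.Perm (Fin k))
    (w : Fin (n * m) → Fin n) (hw : IsRegularWord m w) (h : ¬ WordContains w q) :
    ¬ GraphContains (wordGraph w) (permGraph q) := by
  rintro ⟨f, f', hf, hf', hE⟩
  apply h
  refine ⟨f, hf, fun a b => ?_⟩
  have key : ∀ a, w (f a) = f' (q a) := by
    intro a
    have h1 := hE a (q a) (by simp [permGraph])
    simpa [wordGraph] using h1
  rw [key, key]
  exact hf'.lt_iff_lt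
end

section
/- For every permutation q of length k and all positive integers n and m, the number S_{n,m}(q) of permutations of the regular multiset [n]_m avoiding the pattern q is at most G_{n,m}(q), the number of simple bipartite graphs on ([n·m],[n]) that avoid the bipartite graph G_q associated to q as an ordered subgraph. -/
/-- `S_{n,m}(q) ≤ G_{n,m}(q)`. -/
theorem multiset_count_le_graph_count {k : ℕ} (q : Equiv.Perm (Fin k)) (n m : ℕ)
    (hn : 0 < n) (hm : 0 < m) :
    Nat.card {w : Fin (n * m) → Fin n // IsRegularWord m w ∧ ¬ WordContains w q} ≤
      Nat.card {P : Finset (Fin (n * m) × Fin n) // ¬ GraphContains P (permGraph q)} := by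
  classical
  have key : ∀ (w : Fin (n * m) → Fin n) (i : Fin (n * m)) (j : Fin n),
      (i, j) ∈ wordGraph w ↔ w i = j := by
    intro w i j
    simp [wordGraph]
  refine Nat.card_le_card_of_injective
    (fun w => ⟨wordGraph w.1, fun hP => w.2.2 ?_⟩) ?_
  · obtain ⟨f, f', hf, hf', h⟩ := hP
    have hw : ∀ v, w.1 (f v) = f' (q v) := fun v =>
      (key _ _ _).1 (h v (q v) (by simp [permGraph]))
    exact ⟨f, hf, fun a b => by rw [hw, hw, hf'.lt_iff_lt]⟩
  · intro w₁ w₂ h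
    have h' : wordGraph w₁.1 = wordGraph w₂.1 := congrArg Subtype.val h
    apply Subtype.ext
    funext i
    have : (i, w₁.1 i) ∈ wordGraph w₂.1 := h' ▸ (key _ _ _).2 rfl
    exact ((key _ _ _).1 this).symm
end

section
/- Let q be a permutation of length k, let m, n be positive integers, and let G be a simple bipartite graph on ([n·m],[n]) that avoids the bipartite graph G_q as an ordered subgraph. Then the contraction G' of G, the bipartite graph on ([n],[n]) in which (i,j) is an edge iff there exists t with m(i−1)+1 ≤ t ≤ m·i and (t,j) an edge of G, also avoids G_q as an ordered subgraph. -/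
/-- The contraction inherits the `G_q`-avoiding property. -/
theorem contraction_avoids {k : ℕ} (q : Equiv.Perm (Fin k)) (n m : ℕ)
    (hn : 0 < n) (hm : 0 < m) (G : Finset (Fin (n * m) × Fin n))
    (h : ¬ GraphContains G (permGraph q)) :
    ¬ GraphContains (contraction G) (permGraph q) := by
  rintro ⟨f, f', hf, hf', hE⟩
  have key : ∀ v : Fin k, ∃ t : Fin (n * m), (t, f' (q v)) ∈ G ∧
      m * (f v : ℕ) ≤ (t : ℕ) ∧ (t : ℕ) < m * ((f v : ℕ) + 1) := by
    intro v
    have hv := hE v (q v) (Finset.mem_image.mpr ⟨v, Finset.mem_univ _, rfl⟩)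
    exact (Finset.mem_filter.mp hv).2
  choose g hg hlo hhi using key
  refine h ⟨g, f', ?_, hf', ?_⟩
  · intro a b hab
    have h1 : (f a : ℕ) + 1 ≤ (f b : ℕ) := hf hab
    exact Fin.lt_def.mpr ((hhi a).trans_le ((Nat.mul_le_mul_left m h1).trans (hlo b)))
  · intro v v' hv
    obtain ⟨i, _, hi⟩ := Finset.mem_image.mp hv
    obtain ⟨rfl, rfl⟩ := Prod.mk.inj hi
    exact hg i
end

section
/- Let q be a permutation of length k with permutation matrix M_q, and suppose d is a constant such that for every positive integer n, every n×n 0-1 matrix avoiding M_q has at most d·n entries equal to 1. Then for all positive integers n and m, the number S_{n,m}(q) of permutations of the regular multiset [n]_m avoiding the pattern q satisfies S_{n,m}(q) ≤ ((2 · 15^2)^d)^(n·m). -/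
/-- General lifting principle: if entries of `C` are witnessed by entries of `P` through monotone
block maps, then containment lifts from `C` to `P`. -/
theorem lift_aux {k h n : ℕ} (q : Equiv.Perm (Fin k)) (C : Fin h → Fin h → Bool)
    (P : Fin n → Fin n → Bool) (b : Fin n → Fin h) (hb : Monotone b)
    (hC : ∀ i j, C i j = true → ∃ x y, b x = i ∧ b y = j ∧ P x y = true)
    (hcon : MatContains C (permMatrix q)) : MatContains P (permMatrix q) := by
  obtain ⟨r, c, hr, hc, hq⟩ := hcon
  have key : ∀ i : Fin k, ∃ x y, b x = r i ∧ b y = c (q i) ∧ P x y = true := fun i =>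
    hC _ _ (hq i (q i) (by simp [permMatrix]))
  choose X Y hX hY hP using key
  refine ⟨X, fun j => Y (q.symm j), ?_, ?_, ?_⟩
  · intro i i' hi
    by_contra hlt
    have h1 := hb (not_lt.mp hlt)
    rw [hX, hX] at h1
    exact absurd (hr hi) (not_lt.mpr h1)
  · intro i i' hi
    by_contra hlt
    have h1 := hb (not_lt.mp hlt)
    rw [hY, hY, q.apply_symm_apply, q.apply_symm_apply] at h1
    exact absurd (hc hi) (not_lt.mpr h1)
  · intro i j hij
    have : q i = j := by simpa [permMatrix] using hij
    subst this
    simpa using hP i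

/-- The `2 × 2` block of `P` at position `ij`. -/
def blockOf {n h : ℕ} (P : Fin n → Fin n → Bool) (ij : Fin h × Fin h) :
    Fin 2 → Fin 2 → Bool :=
  fun a b => if hh : 2 * (ij.1 : ℕ) + a < n ∧ 2 * (ij.2 : ℕ) + b < n then
    P ⟨_, hh.1⟩ ⟨_, hh.2⟩ else false

/-- The `2 × 2` contraction. -/
def contr2 {n : ℕ} (h : ℕ) (P : Fin n → Fin n → Bool) : Fin h → Fin h → Bool :=
  fun i j => decide (blockOf P (i, j) ≠ fun _ _ => false)

theorem blockOf_inj {n h : ℕ} (hh : n ≤ 2 * h) :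
    Function.Injective (fun P : Fin n → Fin n → Bool => (blockOf P : Fin h × Fin h → _)) := by
  intro P P' he
  funext x y
  have h1 := congrFun (congrFun (congrFun he
    (⟨x / 2, by omega⟩, ⟨y / 2, by omega⟩)) ⟨x % 2, by omega⟩) ⟨y % 2, by omega⟩
  have hx : 2 * ((x : ℕ) / 2) + (x : ℕ) % 2 = x := Nat.div_add_mod _ _
  have hy : 2 * ((y : ℕ) / 2) + (y : ℕ) % 2 = y := Nat.div_add_mod _ _
  simpa [blockOf, hx, hy] using h1

theorem contr2_avoid {k n h : ℕ} (q : Equiv.Perm (Fin k)) (hh : n ≤ 2 * h)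
    (P : Fin n → Fin n → Bool)
    (hP : ¬ MatContains P (permMatrix q)) : ¬ MatContains (contr2 h P) (permMatrix q) := by
  intro hcon
  apply hP
  refine lift_aux q (contr2 h P) P (fun x => ⟨x / 2, by omega⟩) ?_ ?_ hcon
  · intro x y hxy
    exact Nat.div_le_div_right (c := 2) hxy
  · intro i j hij
    have h1 : blockOf P (i, j) ≠ fun _ _ => false := by simpa [contr2] using hij
    have h2 : ∃ a b, blockOf P (i, j) a b = true := by
      by_contra hne
      push Not at hne
      apply h1
      funext a b
      simpa using hne a b
    obtain ⟨a, b, hab⟩ := h2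
    unfold blockOf at hab
    split_ifs at hab with hlt
    refine ⟨_, _, ?_, ?_, hab⟩
    · ext; simp only; omega
    · ext; simp only; omega

open Classical in
theorem fiber2 {n h : ℕ} (hh : n ≤ 2 * h) (C : Fin h → Fin h → Bool)
    (s : Finset (Fin n → Fin n → Bool)) :
    (s.filter fun P => contr2 h P = C).card ≤ 15 ^ oneEntries C := by
  let S : Fin h × Fin h → Finset (Fin 2 → Fin 2 → Bool) := fun ij =>
    Finset.univ.filter fun B => decide (B ≠ fun _ _ => false) = C ij.1 ij.2
  have h1 : (s.filter fun P => contr2 h P = C).card ≤ (Fintype.piFinset S).card := by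
    apply Finset.card_le_card_of_injOn (fun P => (blockOf P : Fin h × Fin h → _))
    · intro P hP
      have hP' : contr2 h P = C := by
        have := Finset.mem_coe.mp hP
        exact (Finset.mem_filter.mp this).2
      subst hP'
      simp [S, contr2, Fintype.mem_piFinset]
    · exact (blockOf_inj hh).injOn
  refine h1.trans ?_
  rw [Fintype.card_piFinset]
  have h2 : ∀ ij, (S ij).card = if C ij.1 ij.2 = true then 15 else 1 := by
    intro ij
    have ht : (Finset.univ.filter fun B : Fin 2 → Fin 2 → Bool =>
      decide (B ≠ fun _ _ => false) = true).card = 15 := by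
      have : (Finset.univ.filter fun B : Fin 2 → Fin 2 → Bool =>
        decide (B ≠ fun _ _ => false) = true) = Finset.univ.erase (fun _ _ => false) := by
        ext B; simp
      rw [this, Finset.card_erase_of_mem (Finset.mem_univ _), Finset.card_univ]
      simp
    have hf : (Finset.univ.filter fun B : Fin 2 → Fin 2 → Bool =>
      decide (B ≠ fun _ _ => false) = false).card = 1 := by
      rw [Finset.card_eq_one]
      refine ⟨fun _ _ => false, ?_⟩
      ext B; simp
    cases hc : C ij.1 ij.2
    · simpa [S, hc] using hf
    · simpa [S, hc] using ht
  rw [Finset.prod_congr rfl (fun ij _ => h2 ij), Finset.prod_ite]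
  simp [oneEntries]

open Classical in
/-- Klazar's bound: the number of `n × n` matrices avoiding `q`. -/
theorem klazar_bound {k : ℕ} (q : Equiv.Perm (Fin k)) (d : ℕ)
    (hd : ∀ n : ℕ, 0 < n → ∀ P : Fin n → Fin n → Bool,
      ¬ MatContains P (permMatrix q) → oneEntries P ≤ d * n) :
    ∀ n : ℕ, 0 < n → (Finset.univ.filter fun P : Fin n → Fin n → Bool =>
      ¬ MatContains P (permMatrix q)).card ≤ 15 ^ (d * (2 * n)) := by
  intro n
  induction n using Nat.strong_induction_on with
  | _ n ih =>
    intro hn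
    by_cases h1 : n = 1
    · subst h1
      rcases Nat.eq_zero_or_pos d with h0 | h0
      · subst h0
        simp only [zero_mul, pow_zero]
        rw [Finset.card_le_one]
        have hz : ∀ P : Fin 1 → Fin 1 → Bool, ¬ MatContains P (permMatrix q) →
            P = fun _ _ => false := by
          intro P hP
          have := hd 1 one_pos P hP
          simp only [oneEntries, zero_mul, Nat.le_zero, Finset.card_eq_zero,
            Finset.filter_eq_empty_iff] at this
          funext a b
          simpa using this (Finset.mem_univ (a, b))
        intro a ha b hb
        rw [hz a (Finset.mem_filter.mp ha).2, hz b (Finset.mem_filter.mp hb).2]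
      · calc _ ≤ (Finset.univ : Finset (Fin 1 → Fin 1 → Bool)).card := Finset.card_filter_le _ _
          _ = 2 := by simp
          _ ≤ 15 ^ 1 := by norm_num
          _ ≤ _ := Nat.pow_le_pow_right (by norm_num) (by omega)
    · set h := (n + 1) / 2 with hh
      have hle : n ≤ 2 * h := by omega
      have hpos : 0 < h := by omega
      have himg : ((Finset.univ.filter fun P : Fin n → Fin n → Bool =>
          ¬ MatContains P (permMatrix q)).image (contr2 h)) ⊆
          Finset.univ.filter fun P : Fin h → Fin h → Bool =>
          ¬ MatContains P (permMatrix q) := by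
        intro C hC
        obtain ⟨P, hP, rfl⟩ := Finset.mem_image.mp hC
        exact Finset.mem_filter.mpr ⟨Finset.mem_univ _,
          contr2_avoid q hle P (Finset.mem_filter.mp hP).2⟩
      have h2 := Finset.card_le_mul_card_image (f := contr2 h)
        (Finset.univ.filter fun P : Fin n → Fin n → Bool =>
          ¬ MatContains P (permMatrix q)) (15 ^ (d * h)) (by
          intro C hC
          refine (fiber2 hle C _).trans (Nat.pow_le_pow_right (by norm_num) ?_)
          exact hd h hpos C (Finset.mem_filter.mp (himg hC)).2)
      calc _ ≤ _ := h2
        _ ≤ 15 ^ (d * h) * 15 ^ (d * (2 * h)) :=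
          Nat.mul_le_mul_left _ ((Finset.card_le_card himg).trans (ih h (by omega) hpos))
        _ = 15 ^ (d * (h + 2 * h)) := by rw [← pow_add, ← mul_add]
        _ ≤ _ := Nat.pow_le_pow_right (by norm_num) (Nat.mul_le_mul_left _ (by omega))

open Classical in
/-- The contraction matrix of a word. -/
noncomputable def wordContr {n m : ℕ} (w : Fin (n * m) → Fin n) : Fin n → Fin n → Bool :=
  fun i j => decide (∃ t : Fin (n * m), t.divNat = i ∧ w t = j)

theorem wordContr_avoid {k n m : ℕ} (q : Equiv.Perm (Fin k)) (w : Fin (n * m) → Fin n)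
    (hw : ¬ WordContains w q) : ¬ MatContains (wordContr w) (permMatrix q) := by
  rintro ⟨r, c, hr, hc, hq⟩
  apply hw
  have key : ∀ i : Fin k, ∃ t : Fin (n * m), t.divNat = r i ∧ w t = c (q i) := fun i => by
    have := hq i (q i) (by simp [permMatrix])
    simpa [wordContr] using this
  choose T hT hwT using key
  refine ⟨T, ?_, ?_⟩
  · intro i i' hi
    by_contra hlt
    have h1 : (T i').divNat ≤ (T i).divNat := Nat.div_le_div_right (c := m) (not_lt.mp hlt)
    rw [hT, hT] at h1
    exact absurd (hr hi) (not_lt.mpr h1)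
  · intro a b
    rw [hwT, hwT]
    exact hc.lt_iff_lt

open Classical in
theorem wordFiber {n m : ℕ} (A : Fin n → Fin n → Bool) (s : Finset (Fin (n * m) → Fin n)) :
    (s.filter fun w => wordContr w = A).card ≤ 2 ^ (m * oneEntries A) := by
  let R : Fin n → Finset (Fin n) := fun i => Finset.univ.filter fun j => A i j = true
  have h1 : (s.filter fun w => wordContr w = A) ⊆
      Fintype.piFinset fun t : Fin (n * m) => R t.divNat := by
    intro w hw
    have hA := (Finset.mem_filter.mp hw).2
    subst hA
    rw [Fintype.mem_piFinset]
    intro t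
    simp only [R, wordContr, Finset.mem_filter, Finset.mem_univ, true_and, decide_eq_true_eq]
    exact ⟨t, rfl, rfl⟩
  refine (Finset.card_le_card h1).trans ?_
  rw [Fintype.card_piFinset]
  calc ∏ t : Fin (n * m), (R t.divNat).card
      ≤ ∏ t : Fin (n * m), 2 ^ (R t.divNat).card :=
        Finset.prod_le_prod' fun t _ => Nat.lt_two_pow_self.le
    _ = 2 ^ ∑ t : Fin (n * m), (R t.divNat).card := Finset.prod_pow_eq_pow_sum _ _ _
    _ = 2 ^ (m * oneEntries A) := by
      congr 1
      refine (finProdFinEquiv.symm.sum_comp (fun x : Fin n × Fin m => (R x.1).card)).trans ?_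
      rw [Fintype.sum_prod_type]
      simp only [Finset.sum_const, Finset.card_univ, Fintype.card_fin, smul_eq_mul]
      rw [← Finset.mul_sum]
      congr 1
      simp only [oneEntries, R, Finset.card_filter]
      rw [Fintype.sum_prod_type]

/-- `S_{n,m}(q) ≤ ((2 · 15^2)^d)^(n·m)` under Füredi–Hajnal. -/
theorem multiset_count_bound {k : ℕ} (q : Equiv.Perm (Fin k)) (d : ℕ)
    (hd : ∀ n : ℕ, 0 < n → ∀ P : Fin n → Fin n → Bool,
      ¬ MatContains P (permMatrix q) → oneEntries P ≤ d * n)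
    (n m : ℕ) (hn : 0 < n) (hm : 0 < m) :
    Nat.card {w : Fin (n * m) → Fin n // IsRegularWord m w ∧ ¬ WordContains w q} ≤
      ((2 * 15 ^ 2) ^ d) ^ (n * m) := by
  classical
  rw [Nat.card_eq_fintype_card, Fintype.card_subtype]
  set s := Finset.univ.filter fun w : Fin (n * m) → Fin n =>
    IsRegularWord m w ∧ ¬ WordContains w q with hs
  have himg : s.image wordContr ⊆ Finset.univ.filter fun P : Fin n → Fin n → Bool =>
      ¬ MatContains P (permMatrix q) := by
    intro C hC
    obtain ⟨w, hw, rfl⟩ := Finset.mem_image.mp hC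
    exact Finset.mem_filter.mpr ⟨Finset.mem_univ _,
      wordContr_avoid q w (Finset.mem_filter.mp hw).2.2⟩
  have h2 := Finset.card_le_mul_card_image (f := wordContr) s (2 ^ (m * (d * n))) (by
    intro C hC
    convert (wordFiber C s).trans (Nat.pow_le_pow_right (by norm_num) (Nat.mul_le_mul_left m
      (hd n hn C (Finset.mem_filter.mp (himg hC)).2))))
  have h3 := klazar_bound q d hd n hn
  calc s.card ≤ _ := h2
    _ ≤ 2 ^ (m * (d * n)) * 15 ^ (d * (2 * n)) :=
      Nat.mul_le_mul_left _ ((Finset.card_le_card himg).trans (by convert h3))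
    _ ≤ 2 ^ (m * (d * n)) * 15 ^ (d * (2 * (n * m))) := by
      apply Nat.mul_le_mul_left
      apply Nat.pow_le_pow_right (by norm_num)
      apply Nat.mul_le_mul_left
      apply Nat.mul_le_mul_left
      exact Nat.le_mul_of_pos_right n hm
    _ = _ := by
      rw [← pow_mul, mul_pow, ← pow_mul]
      congr 2 <;> ring
end

section
/- For all positive integers n and m, the number of permutations of the regular multiset [n]_m avoiding the multiset pattern 212 (the m-Stirling permutations with n distinct elements) equals the product ∏_{j=0}^{n−1} (j·m + 1) = 1·(m+1)·(2m+1)···((n−1)m+1). -/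
/-- Avoidance of 212 for lists. -/
def LAvoid (l : List ℕ) : Prop := ∀ a b : ℕ, b < a → ¬ ([a, b, a].Sublist l)

/-- Lists which are `m`-Stirling permutations on `{0,…,n-1}`. -/
def LStir (m n : ℕ) : Type :=
  {l : List ℕ // (∀ j, l.count j = if j < n then m else 0) ∧ LAvoid l}

theorem strip_sublist {x : ℕ} {t R : List ℕ} : ∀ (A : List ℕ), x ∉ A →
    (x :: t).Sublist (A ++ R) → (x :: t).Sublist R
  | [], _, h => h
  | y :: A, hx, h => by
    simp only [List.mem_cons, not_or] at hx
    rw [List.cons_append, List.sublist_cons_iff] at h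
    rcases h with h | ⟨r, hr, -⟩
    · exact strip_sublist A hx.2 h
    · simp only [List.cons.injEq] at hr
      exact absurd hr.1 hx.1

theorem split_replicate (n : ℕ) : ∀ t : List ℕ, (∀ b, b ≠ n → ¬ [b, n].Sublist t) →
    ∃ t', t = List.replicate (t.count n) n ++ t' ∧ n ∉ t'
  | [], _ => ⟨[], by simp, by simp⟩
  | x :: xs, h => by
    by_cases hx : x = n
    · subst hx
      obtain ⟨t', h1, h2⟩ := split_replicate x xs (fun b hb hs => h b hb (hs.cons x))
      refine ⟨t', ?_, h2⟩
      rw [List.count_cons_self, List.replicate_succ, List.cons_append, ← h1]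
    · have hn : n ∉ xs := fun hm =>
        h x hx (List.Sublist.cons_cons x (List.singleton_sublist.2 hm))
      have hn' : n ∉ x :: xs := by
        simp only [List.mem_cons, not_or]; exact ⟨fun e => hx e.symm, hn⟩
      exact ⟨x :: xs, by rw [List.count_eq_zero_of_not_mem hn']; simp, hn'⟩

theorem LStir.lt_of_mem {m n : ℕ} {l : List ℕ} (h : ∀ j, l.count j = if j < n then m else 0)
    {x : ℕ} (hx : x ∈ l) : x < n := by
  by_contra hc
  have := h x
  rw [if_neg hc] at this
  exact List.count_eq_zero.1 this hx

theorem LStir.length {m : ℕ} : ∀ (n : ℕ) (l : List ℕ),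
    (∀ j, l.count j = if j < n then m else 0) → l.length = n * m := by
  intro n l h
  have h1 : (l : Multiset ℕ).toFinset ⊆ Finset.range n := by
    intro x hx
    simp only [Multiset.mem_toFinset, Multiset.mem_coe] at hx
    exact Finset.mem_range.2 (LStir.lt_of_mem h hx)
  have h2 := Multiset.sum_count_eq_card (s := Finset.range n) (m := (l : Multiset ℕ))
    (fun a ha => Finset.mem_range.2 (LStir.lt_of_mem h (by simpa using ha)))
  rw [Multiset.coe_card] at h2
  rw [← h2, Finset.sum_congr rfl (g := fun _ => m)]
  · simp
  · intro x hx
    rw [Multiset.coe_count, h x, if_pos (Finset.mem_range.1 hx)]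

/-- Insert a block. -/
def ins (m n : ℕ) (A B : List ℕ) : List ℕ := A ++ (List.replicate m n ++ B)

theorem ins_filter (m n : ℕ) (A B : List ℕ) (hA : n ∉ A) (hB : n ∉ B) :
    (ins m n A B).filter (fun x => decide (x ≠ n)) = A ++ B := by
  unfold ins
  rw [List.filter_append, List.filter_append, List.filter_replicate,
    List.filter_eq_self.2, List.filter_eq_self.2]
  · simp
  · intro a ha; simp only [decide_eq_true_eq]; rintro rfl; exact hB ha
  · intro a ha; simp only [decide_eq_true_eq]; rintro rfl; exact hA ha

theorem ins_idxOf (m n : ℕ) (hm : 0 < m) (A B : List ℕ) (hA : n ∉ A) :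
    (ins m n A B).idxOf n = A.length := by
  obtain ⟨k, rfl⟩ := Nat.exists_eq_succ_of_ne_zero hm.ne'
  unfold ins
  rw [List.idxOf_append_of_notMem hA, List.replicate_succ, List.cons_append, List.idxOf_cons_self]
  rfl

theorem ins_avoid (m n : ℕ) (A B : List ℕ) (hlt : ∀ x ∈ A ++ B, x < n) (h : LAvoid (A ++ B)) :
    LAvoid (ins m n A B) := by
  have hA : n ∉ A := fun hx => lt_irrefl _ (hlt n (by simp [hx]))
  have hB : n ∉ B := fun hx => lt_irrefl _ (hlt n (by simp [hx]))
  intro a b hba hs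
  by_cases ha : a = n
  · subst ha
    have h1 := strip_sublist A hA hs
    have h2 : [b, a].Sublist (List.replicate m a ++ B) := (List.sublist_cons_self _ _).trans h1
    have h3 := strip_sublist _ (fun hx => hba.ne (List.eq_of_mem_replicate hx)) h2
    exact hB (h3.subset (by simp))
  · have hmem : a ∈ ins m n A B := hs.subset (by simp)
    have han : a < n := by
      unfold ins at hmem
      simp only [List.mem_append] at hmem hlt
      rcases hmem with h | h | h
      · exact hlt a (Or.inl h)
      · exact absurd (List.eq_of_mem_replicate h) ha
      · exact hlt a (Or.inr h)
    have h1 := hs.filter (fun x => decide (x ≠ n))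
    rw [ins_filter m n A B hA hB, List.filter_eq_self.2] at h1
    · exact h a b hba h1
    · intro x hx
      simp only [List.mem_cons, List.not_mem_nil, or_false] at hx
      simp only [decide_eq_true_eq]
      omega

theorem ins_count (m n : ℕ) (A B : List ℕ) (hlt : n ∉ A ++ B) (j : ℕ) :
    (ins m n A B).count j = if j = n then m else (A ++ B).count j := by
  unfold ins
  split_ifs with hj
  · subst hj
    have := List.count_eq_zero_of_not_mem hlt
    rw [List.count_append] at this
    rw [List.count_append, List.count_append, List.count_replicate_self]
    omega
  · rw [List.count_append, List.count_append, List.count_append, List.count_replicate]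
    simp [Ne.symm hj]

theorem card_step (m n : ℕ) (hm : 0 < m) :
    Nat.card (LStir m (n + 1)) = Nat.card (LStir m n) * (n * m + 1) := by
  have key : Nat.card (LStir m n × Fin (n * m + 1)) = Nat.card (LStir m (n + 1)) := by
    have hnot : ∀ p : LStir m n, n ∉ p.1 := fun p hx => lt_irrefl _ (LStir.lt_of_mem p.2.1 hx)
    refine Nat.card_eq_of_bijective (fun p => ⟨ins m n (p.1.1.take p.2) (p.1.1.drop p.2), ?_, ?_⟩)
      ⟨?_, ?_⟩
    · intro j
      rw [ins_count, List.take_append_drop, p.1.2.1 j]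
      · split_ifs <;> omega
      · rw [List.take_append_drop]; exact hnot p.1
    · apply ins_avoid
      · intro x hx
        rw [List.take_append_drop] at hx
        exact LStir.lt_of_mem p.1.2.1 hx
      · rw [List.take_append_drop]; exact p.1.2.2
    · rintro ⟨p, k⟩ ⟨q, k'⟩ h
      have h := congrArg Subtype.val h
      simp only at h
      have e1 := ins_filter m n _ _ (fun hx => hnot p (List.mem_of_mem_take (i := k) hx))
        (fun hx => hnot p (List.mem_of_mem_drop (i := k) hx))
      have e2 := ins_filter m n _ _ (fun hx => hnot q (List.mem_of_mem_take (i := k') hx))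
        (fun hx => hnot q (List.mem_of_mem_drop (i := k') hx))
      have f1 := ins_idxOf m n hm _ (p.1.drop k) (fun hx => hnot p (List.mem_of_mem_take (i := k) hx))
      have f2 := ins_idxOf m n hm _ (q.1.drop k')
        (fun hx => hnot q (List.mem_of_mem_take (i := k') hx))
      rw [h, e2, List.take_append_drop, List.take_append_drop] at e1
      rw [h, f2, List.length_take, List.length_take, LStir.length n _ p.2.1,
        LStir.length n _ q.2.1] at f1
      have hk := k.2
      have hk' := k'.2
      exact Prod.ext (Subtype.ext e1.symm) (Fin.ext (by simp only; omega))
    · rintro ⟨l, hc, ha⟩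
      have hcn : l.count n = m := by rw [hc n, if_pos (Nat.lt_succ_self n)]
      have hmem : n ∈ l := List.count_pos_iff.1 (by omega)
      obtain ⟨s, t, rfl, hs⟩ := List.eq_append_cons_of_mem hmem
      obtain ⟨t', ht, hn'⟩ := split_replicate n t (by
        intro b hb hsub
        have hbm : b < n + 1 := LStir.lt_of_mem hc (by
          have : b ∈ t := hsub.subset (by simp)
          simp [this])
        exact ha n b (by omega) ((List.Sublist.cons_cons n hsub).trans
          (List.sublist_append_right _ _)))
      have hct : t.count n + 1 = m := by
        rw [← hcn, List.count_append, List.count_cons_self, List.count_eq_zero_of_not_mem hs]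
        omega
      have hl : s ++ n :: t = ins m n s t' := by
        unfold ins
        rw [← hct, List.replicate_succ, List.cons_append, ← ht]
      have hst : n ∉ s ++ t' := by simp [hs, hn']
      have hc' : ∀ j, (s ++ t').count j = if j < n then m else 0 := by
        intro j
        have h1 := hc j
        rw [hl, ins_count m n s t' hst] at h1
        by_cases hj : j = n
        · subst hj
          rw [List.count_eq_zero_of_not_mem hst]; simp
        · rw [if_neg hj] at h1
          rw [h1]
          split_ifs <;> omega
      have hlen := LStir.length n _ hc'
      rw [List.length_append] at hlen
      refine ⟨⟨⟨s ++ t', hc', ?_⟩, ⟨s.length, by omega⟩⟩, ?_⟩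
      · intro a b hab hsub
        refine ha a b hab (hsub.trans ?_)
        rw [hl]
        exact List.Sublist.append (List.Sublist.refl _) (List.sublist_append_right _ _)
      · apply Subtype.ext
        simp only [List.take_left, List.drop_left]
        exact hl.symm
  rw [← key, Nat.card_prod, Nat.card_fin]

theorem card_LStir (m : ℕ) (hm : 0 < m) : ∀ n : ℕ,
    Nat.card (LStir m n) = ∏ j ∈ Finset.range n, (j * m + 1)
  | 0 => by
    rw [Finset.range_zero, Finset.prod_empty, Nat.card_eq_one_iff_unique]
    have hnil : ∀ p : LStir m 0, p.1 = [] := fun p =>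
      List.eq_nil_of_length_eq_zero (by rw [LStir.length 0 _ p.2.1]; simp)
    refine ⟨⟨fun p q => Subtype.ext ?_⟩, ⟨⟨[], by simp, ?_⟩⟩⟩
    · rw [hnil p, hnil q]
    · intro a b _ h
      simp at h
  | n + 1 => by
    rw [card_step m n hm, card_LStir m hm n, Finset.prod_range_succ]

theorem count_ofFn_val {l n : ℕ} (w : Fin l → Fin n) (j : ℕ) :
    (List.ofFn fun i => (w i : ℕ)).count j =
      (Finset.univ.filter fun i => (w i : ℕ) = j).card := by
  rw [List.ofFn_eq_map, List.count, List.countP_map, List.countP_eq_length_filter]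
  rw [Finset.card_filter, ← List.sum_ofFn, List.ofFn_eq_map]
  generalize List.finRange l = L
  induction L with
  | nil => rfl
  | cons x xs ih =>
    rw [List.filter_cons, List.map_cons, List.sum_cons, ← ih]
    by_cases h : (w x : ℕ) = j
    · simp [h, Nat.add_comm]
    · simp [h]

theorem avoid_ofFn {l n : ℕ} (w : Fin l → Fin n) :
    LAvoid (List.ofFn fun i => (w i : ℕ)) ↔ ¬ Contains212 w := by
  constructor
  · rintro h ⟨i, j, k, hij, hjk, hik, hlt⟩
    refine h (w i) (w j) hlt ?_
    have h1 : ([i, j, k] : List (Fin l)).Sublist (List.finRange l) := by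
      apply List.sublist_of_subperm_of_pairwise (r := (· < ·))
      · apply List.subperm_of_subset
        · simp [hij.ne, hjk.ne, (hij.trans hjk).ne]
        · intro x _; exact List.mem_finRange x
      · simp [hij, hjk, hij.trans hjk]
      · exact List.pairwise_lt_finRange l
    have h2 := h1.map (fun i => (w i : ℕ))
    rw [← List.ofFn_eq_map] at h2
    simpa [← hik] using h2
  · intro h a b hab hs
    rw [List.ofFn_eq_map] at hs
    obtain ⟨L, hL, he⟩ := List.sublist_map_iff.1 hs
    have hl3 : L.length = 3 := by
      have := congrArg List.length he
      simpa using this.symm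
    obtain ⟨i, j, k, rfl⟩ := List.length_eq_three.1 hl3
    simp only [List.map_cons, List.map_nil, List.cons.injEq, and_true] at he
    have hp := (List.pairwise_lt_finRange l).sublist hL
    simp at hp
    refine h ⟨i, j, k, hp.1.1, hp.2, Fin.ext ?_, Fin.lt_def.2 ?_⟩ <;> omega

theorem card_transfer (n m : ℕ) :
    Nat.card {w : Fin (n * m) → Fin n // IsRegularWord m w ∧ ¬ Contains212 w} =
      Nat.card (LStir m n) := by
  refine Nat.card_eq_of_bijective
    (fun w => ⟨List.ofFn fun i => (w.1 i : ℕ), ?_, (avoid_ofFn w.1).2 w.2.2⟩) ⟨?_, ?_⟩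
  · intro j
    rw [count_ofFn_val]
    split_ifs with hj
    · refine Eq.trans ?_ (w.2.1 ⟨j, hj⟩)
      congr 1
      ext i
      simp [Fin.ext_iff]
    · rw [Finset.card_eq_zero, Finset.filter_eq_empty_iff]
      intro i _ he
      exact hj (he ▸ (w.1 i).2)
  · intro w w' h
    have h := List.ofFn_injective (congrArg Subtype.val h)
    exact Subtype.ext (funext fun i => Fin.ext (congrFun h i))
  · rintro ⟨l, hc, ha⟩
    have hlen := LStir.length n l hc
    let w : Fin (n * m) → Fin n := fun i =>
      ⟨l[(i : ℕ)]'(by rw [hlen]; exact i.2), LStir.lt_of_mem hc (List.getElem_mem _)⟩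
    have hw : (List.ofFn fun i => (w i : ℕ)) = l := by
      apply List.ext_getElem
      · simp [hlen]
      · intro i h1 h2
        simp [w]
    refine ⟨⟨w, ?_, (avoid_ofFn w).1 (hw ▸ ha)⟩, Subtype.ext hw⟩
    intro j
    have := hc j
    rw [← hw, count_ofFn_val, if_pos j.2] at this
    refine Eq.trans ?_ this
    congr 1
    ext i
    simp [Fin.ext_iff]

/-- The number of `m`-Stirling permutations with `n` distinct elements. -/
theorem stirling_count (n m : ℕ) (hn : 0 < n) (hm : 0 < m) :
    Nat.card {w : Fin (n * m) → Fin n // IsRegularWord m w ∧ ¬ Contains212 w} =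
      ∏ j ∈ Finset.range n, (j * m + 1) := by
  rw [card_transfer, card_LStir m hm n]
end

section
/- The number of permutations of the regular multiset [n]_m avoiding the multiset pattern 212 grows super-exponentially: for every fixed positive integer m and every real constant c ≥ 1, there exists a positive integer n such that the number of 212-avoiding permutations of [n]_m is strictly greater than c^(n·m). Hence the Stanley–Wilf bound fails for forbidden patterns that are themselves multiset permutations. -/
theorem block_regular (n m : ℕ) (σ : Equiv.Perm (Fin n)) :
    IsRegularWord m (fun i : Fin (n * m) => σ i.divNat) := by
  intro j
  have h : (Finset.univ.filter fun i : Fin (n * m) => σ i.divNat = j)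
      = Finset.univ.image (fun b : Fin m => finProdFinEquiv (σ.symm j, b)) := by
    ext i
    simp only [Finset.mem_filter, Finset.mem_univ, true_and, Finset.mem_image]
    constructor
    · intro hi
      refine ⟨i.modNat, ?_⟩
      rw [← hi, Equiv.symm_apply_apply]
      exact finProdFinEquiv.apply_symm_apply i
    · rintro ⟨b, rfl⟩
      have := finProdFinEquiv.symm_apply_apply (σ.symm j, b)
      have h1 : (finProdFinEquiv (σ.symm j, b)).divNat = σ.symm j := congrArg Prod.fst this
      rw [h1, Equiv.apply_symm_apply]
  rw [h, Finset.card_image_of_injective]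
  · simp
  · intro a b hab
    exact (Prod.mk.inj (finProdFinEquiv.injective hab)).2

theorem block_avoids (n m : ℕ) (σ : Equiv.Perm (Fin n)) :
    ¬ Contains212 (fun i : Fin (n * m) => σ i.divNat) := by
  rintro ⟨a, b, d, hab, hbd, he, hlt⟩
  have h1 : a.divNat = d.divNat := σ.injective he
  have hmono : ∀ x y : Fin (n * m), x < y → x.divNat ≤ y.divNat := fun x y hxy =>
    Nat.div_le_div_right (Nat.le_of_lt hxy)
  have h2 : b.divNat = a.divNat :=
    le_antisymm (h1 ▸ hmono b d hbd) (hmono a b hab)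
  simp only [h2] at hlt
  exact lt_irrefl _ hlt

theorem factorial_le_count (n m : ℕ) (hm : 0 < m) :
    n.factorial ≤
      Nat.card {w : Fin (n * m) → Fin n // IsRegularWord m w ∧ ¬ Contains212 w} := by
  have hc : Nat.card (Equiv.Perm (Fin n)) = n.factorial := by
    rw [Nat.card_eq_fintype_card, Fintype.card_perm, Fintype.card_fin]
  rw [← hc]
  refine Nat.card_le_card_of_injective
    (fun σ => ⟨fun i : Fin (n * m) => σ i.divNat, block_regular n m σ, block_avoids n m σ⟩) ?_
  intro σ τ h
  ext x
  have h0 := congrFun (congrArg Subtype.val h) (finProdFinEquiv (x, ⟨0, hm⟩))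
  have h1 : (finProdFinEquiv (x, (⟨0, hm⟩ : Fin m))).divNat = x :=
    congrArg Prod.fst (finProdFinEquiv.symm_apply_apply (x, (⟨0, hm⟩ : Fin m)))
  simp only [h1] at h0
  rw [h0]

/-- The number of `212`-avoiding multiset permutations grows super-exponentially. -/
theorem stirling_superexponential (m : ℕ) (hm : 0 < m) (c : ℝ) (hc : 1 ≤ c) :
    ∃ n : ℕ, 0 < n ∧
      c ^ (n * m) <
        (Nat.card {w : Fin (n * m) → Fin n // IsRegularWord m w ∧ ¬ Contains212 w} : ℝ) := by
  have ht := FloorSemiring.tendsto_pow_div_factorial_atTop (c ^ m)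
  obtain ⟨n, hn, hpos⟩ :=
    ((ht.eventually (gt_mem_nhds one_pos)).and (Filter.eventually_gt_atTop 0)).exists
  refine ⟨n, hpos, ?_⟩
  rw [div_lt_one (by positivity), ← pow_mul, mul_comm m n] at hn
  exact hn.trans_le (by exact_mod_cast factorial_le_count n m hm)
end
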